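/- arXiv:math/9207210 — 2 statements merged into one kernel-verified Lean document; each statement's English description precedes it below -/
import Mathlib

section
/- Let k be an algebraically closed field of odd characteristic p, let a be a nonzero element of k, and let n, s, t be positive integers with gcd(n,t) = 1, p dividing n, t dividing s, and 1 < t < n - 3. Then the polynomial f = Y^n - a·Y^t + X^s over the rational function field k(X) has n distinct roots in a splitting field, and the image of its Galois group in the group of permutations of this set of roots is exactly the alternating group on those n roots. -/
open Polynomial

open scoped Classical

/-!
Let `G` be the group of permutations of the roots induced, up to scalars, by the automorphisms of
the splitting field that send `X` to `μ X` for some `μ ∈ kˣ`. It contains the Galois group, and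
commutators in `G` fix `X`, so they lie in the Galois group; since `A_n` is perfect for `n ≥ 5`, it
suffices that `G` contains `A_n`.

At `X = 0` the polynomial becomes `Y ^ t (Y ^ (n - t) - a)`, so, writing `s = t e`, its roots are
power series of two kinds: `n - t` with constant term `b`, `b ^ (n - t) = a`, and `t` of the form
`w X ^ e + ⋯`, `a w ^ t = 1`. A substitution `X ↦ μ X`, combined with a scaling of `Y`, can rotate
either family of leading coefficients while fixing the other, so both families are Jordan sets of
`G`. Their sizes are coprime and `G` is transitive (the polynomial is irreducible by Eisenstein's
criterion), which forces every set of roots of either size to be a Jordan set; two sets of the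
smaller size meeting in one point yield a 3-cycle, and Jordan's theorem gives `A_n ≤ G`.

Conversely, as `p ∣ n`, the derivative is the monomial `-a t Y ^ (t - 1)`, so the discriminant is a
constant times `X ^ (s (t - 1))`, which is a square since `t ∣ s`.
-/

namespace AbhyankarTrinomial

section JordanSets

open MulAction Set Equiv
open scoped Pointwise commutatorElement

variable {G Ω : Type*} [Group G] [MulAction G Ω] {A B : Set Ω}

variable (G) in
/-- A *Jordan set* of a group action: the elements of the group fixing every point outside `A`
permute `A` transitively. -/
def IsJordanSet (A : Set Ω) : Prop :=
  ∀ x ∈ A, ∀ y ∈ A, ∃ g ∈ fixingSubgroup G Aᶜ, g • x = y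

theorem smul_set_eq_of_mem_fixingSubgroup_compl {g : G} (hg : g ∈ fixingSubgroup G Aᶜ) :
    g • A = A := by
  have h : g • Aᶜ = Aᶜ := fixingSubgroup_le_stabilizer G Aᶜ hg
  rwa [smul_set_compl, compl_inj_iff] at h

theorem IsJordanSet.smul (hA : IsJordanSet G A) (g : G) : IsJordanSet G (g • A) := by
  rintro _ ⟨x, hx, rfl⟩ _ ⟨y, hy, rfl⟩
  obtain ⟨u, hu, rfl⟩ := hA x hx y hy
  refine ⟨g * u * g⁻¹, ?_, by simp [mul_smul]⟩
  rw [← smul_set_compl]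
  exact conj_mem_fixingSubgroup rfl hu

theorem IsJordanSet.ncard_dvd_of_isBlock {C : Set Ω} (hA : IsJordanSet G A) (hCA : C ⊆ A)
    (hC : IsBlock (fixingSubgroup G Aᶜ) C) (hne : C.Nonempty) : C.ncard ∣ A.ncard := by
  obtain ⟨c, hc⟩ := hne
  have hmem (x : Ω) : x ∈ SubMulAction.ofFixingSubgroup G Aᶜ ↔ x ∈ A := not_not
  have : IsPretransitive (fixingSubgroup G Aᶜ) (SubMulAction.ofFixingSubgroup G Aᶜ) := by
    refine ⟨fun x y => ?_⟩
    obtain ⟨g, hg, hgx⟩ := hA x ((hmem x).1 x.2) y ((hmem y).1 y.2)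
    exact ⟨⟨g, hg⟩, Subtype.ext hgx⟩
  have hdvd := (hC.subtype_val_preimage (C := SubMulAction.ofFixingSubgroup G Aᶜ)).ncard_dvd_card
    ⟨⟨c, (hmem c).2 (hCA hc)⟩, hc⟩
  rw [ncard_preimage_of_injective_subset_range Subtype.val_injective
    (fun x hx => ⟨⟨x, (hmem x).2 (hCA hx)⟩, rfl⟩)] at hdvd
  rwa [Nat.card_congr (Equiv.subtypeEquivRight hmem)] at hdvd

section Finite

variable [Finite Ω]

theorem ncard_diff_smul_set (g : G) (A : Set Ω) : (A \ g • A).ncard = (g • A \ A).ncard :=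
  (ncard_eq_ncard_iff_ncard_sdiff_eq_ncard_sdiff (toFinite _) (toFinite _)).1
    (ncard_smul_set g A).symm

theorem ncard_smul_compl_diff_compl (g : G) (A : Set Ω) :
    (g • Aᶜ \ Aᶜ).ncard = (g • A \ A).ncard := by
  rw [smul_set_compl, compl_sdiff_compl, ncard_diff_smul_set]

theorem isBlock_smul_diff_of_minimal {g : G}
    (hmin : ∀ h : G, (h • A \ A).Nonempty → (g • A \ A).ncard ≤ (h • A \ A).ncard) :
    IsBlock (fixingSubgroup G A) (g • A \ A) := by
  rw [isBlock_iff_smul_eq_or_disjoint]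
  rintro ⟨h, hh⟩
  have hA : h • A = A := fixingSubgroup_le_stabilizer G A hh
  have htranslate : (g⁻¹ * h * g) • A \ A = g⁻¹ • (h • (g • A \ A) \ (g • A \ A)) := by
    have hfix {x : Ω} (hx : x ∈ A) : h⁻¹ • x = x :=
      (mem_fixingSubgroup_iff G).1 (inv_mem hh) x hx
    have hdiff : h • (g • A \ A) \ (g • A \ A) = h • g • A \ g • A := by
      rw [smul_set_sdiff, hA]
      ext x
      simp only [mem_sdiff, mem_smul_set_iff_inv_smul_mem (a := h)]
      grind
    rw [hdiff, smul_set_sdiff, inv_smul_smul, mul_smul, mul_smul]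
  by_cases hne : (h • (g • A \ A) \ (g • A \ A)).Nonempty
  · have hle := hmin (g⁻¹ * h * g) (by rw [htranslate]; exact hne.smul_set)
    rw [htranslate, ncard_smul_set, ← ncard_smul_set h (g • A \ A)] at hle
    exact .inr (sdiff_eq_left.1 (eq_of_subset_of_ncard_le sdiff_subset hle))
  · rw [not_nonempty_iff_eq_empty, sdiff_eq_empty] at hne
    exact .inl (eq_of_subset_of_ncard_le hne (ncard_smul_set h _).ge)

/-- The smallest nonempty `g • A \ A` is a block for both Jordan sets, so that its size divides
both of theirs. -/
theorem exists_ncard_smul_diff_eq_one [IsPretransitive G Ω] (hA : IsJordanSet G A)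
    (hA' : IsJordanSet G Aᶜ) (hne : A.Nonempty) (hne' : Aᶜ.Nonempty)
    (hco : A.ncard.Coprime Aᶜ.ncard) : ∃ g : G, (g • A \ A).ncard = 1 := by
  have hmoves : ∃ g : G, (g • A \ A).Nonempty := by
    obtain ⟨a, ha⟩ := hne
    obtain ⟨b, hb⟩ := hne'
    obtain ⟨g, rfl⟩ := exists_smul_eq G a b
    exact ⟨g, g • a, smul_mem_smul_set ha, hb⟩
  obtain ⟨g, hg, hmin⟩ :=
    exists_minimalFor_of_wellFoundedLT _ (fun g : G => (g • A \ A).ncard) hmoves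
  have hmin (h : G) (hh : (h • A \ A).Nonempty) : (g • A \ A).ncard ≤ (h • A \ A).ncard :=
    (le_total _ _).elim id (hmin hh)
  refine ⟨g, Nat.eq_one_of_dvd_coprimes hco ?_ ?_⟩
  · rw [← ncard_smul_compl_diff_compl]
    refine hA.ncard_dvd_of_isBlock ?_ ?_ ?_
    · rintro x ⟨-, hx⟩
      exact not_not.1 hx
    · apply isBlock_smul_diff_of_minimal
      intro h
      rw [← ncard_pos (toFinite _), ncard_smul_compl_diff_compl, ncard_smul_compl_diff_compl,
        ncard_pos (toFinite _)]
      exact hmin h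
    · rwa [← ncard_pos (toFinite _), ncard_smul_compl_diff_compl, ncard_pos (toFinite _)]
  · refine hA'.ncard_dvd_of_isBlock (fun x hx => hx.2) ?_ hg
    rw [compl_compl]
    exact isBlock_smul_diff_of_minimal hmin

theorem exists_smul_eq_insert_diff_singleton (hA : IsJordanSet G A) (hA' : IsJordanSet G Aᶜ)
    {g : G} (hg : (g • A \ A).ncard = 1) {a b : Ω} (ha : a ∈ A) (hb : b ∉ A) :
    ∃ h : G, h • A = insert b (A \ {a}) := by
  obtain ⟨b₀, hb₀⟩ := ncard_eq_one.1 hg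
  obtain ⟨a₀, ha₀⟩ := ncard_eq_one.1 ((ncard_diff_smul_set g A).trans hg)
  have hgA : g • A = insert b₀ (A \ {a₀}) := by
    rw [← ha₀, insert_eq, ← hb₀, Set.sdiff_sdiff_right_self, inter_comm, sdiff_union_inter]
  have hb₀A : b₀ ∉ A := (hb₀.ge rfl).2
  obtain ⟨u, hu, rfl⟩ := hA a₀ (ha₀.ge rfl).1 a ha
  obtain ⟨v, hv, rfl⟩ := hA' b₀ hb₀A b hb
  rw [compl_compl] at hv
  refine ⟨v * u * g, ?_⟩
  have huA : u • A = A := smul_set_eq_of_mem_fixingSubgroup_compl hu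
  have hvA : v • (A \ {u • a₀}) = A \ {u • a₀} :=
    fixingSubgroup_le_stabilizer G _ (fixingSubgroup_antitone G Ω sdiff_subset hv)
  rw [mul_smul, mul_smul, hgA, smul_set_insert, smul_set_sdiff, huA, smul_set_singleton,
    (mem_fixingSubgroup_iff G).1 hu b₀ hb₀A, smul_set_insert, hvA]

/-- The translate of `A` with least distance to `B` is `B`, since an exchange would lower the
distance. -/
theorem exists_smul_eq_of_exchange
    (hexch : ∀ a ∈ A, ∀ b ∉ A, ∃ h : G, h • A = insert b (A \ {a})) (hAB : B.ncard = A.ncard) :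
    ∃ h : G, h • A = B := by
  obtain ⟨h, -, hmin⟩ := exists_minimalFor_of_wellFoundedLT (fun _ => True)
    (fun h : G => (B \ h • A).ncard) ⟨1, trivial⟩
  refine ⟨h, (eq_of_subset_of_ncard_le ?_ (by rw [ncard_smul_set, hAB])).symm⟩
  by_contra hsub
  obtain ⟨b, hbB, hbA⟩ := not_subset.1 hsub
  have hne : (h • A \ B).Nonempty := by
    rw [← ncard_pos (toFinite _), ← (ncard_eq_ncard_iff_ncard_sdiff_eq_ncard_sdiff (toFinite _)
      (toFinite _)).1 (hAB.trans (ncard_smul_set h A).symm), ncard_pos (toFinite _)]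
    exact ⟨b, hbB, hbA⟩
  obtain ⟨_, ⟨a, ha, rfl⟩, haB⟩ := hne
  obtain ⟨u, hu⟩ := hexch a ha (h⁻¹ • b) (by rwa [← mem_smul_set_iff_inv_smul_mem])
  have hhu : (h * u) • A = insert b (h • A \ {h • a}) := by
    rw [mul_smul, hu, smul_set_insert, smul_inv_smul, smul_set_sdiff, smul_set_singleton]
  have hlt : (B \ (h * u) • A).ncard < (B \ h • A).ncard := by
    refine ncard_lt_ncard ⟨?_, fun hle => (hle ⟨hbB, hbA⟩).2 (hhu ▸ mem_insert _ _)⟩ (toFinite _)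
    rintro x ⟨hxB, hx⟩
    refine ⟨hxB, fun hxA => hx (hhu ▸ mem_insert_of_mem _ ⟨hxA, ?_⟩)⟩
    rintro rfl
    exact haB hxB
  exact hlt.not_ge (hmin trivial hlt.le)

theorem IsJordanSet.of_ncard_eq [IsPretransitive G Ω] (hA : IsJordanSet G A)
    (hA' : IsJordanSet G Aᶜ) (hne : A.Nonempty) (hne' : Aᶜ.Nonempty)
    (hco : A.ncard.Coprime Aᶜ.ncard) (hAB : B.ncard = A.ncard) : IsJordanSet G B := by
  obtain ⟨g, hg⟩ := exists_ncard_smul_diff_eq_one hA hA' hne hne' hco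
  obtain ⟨h, rfl⟩ := exists_smul_eq_of_exchange
    (fun a ha b hb => exists_smul_eq_insert_diff_singleton hA hA' hg ha hb) hAB
  exact hA.smul h

theorem isPreprimitive_of_isJordanSet_of_ncard_eq [IsPretransitive G Ω] {m : ℕ}
    (hm : 1 < m) (hmΩ : m < Nat.card Ω) (hJ : ∀ A : Set Ω, A.ncard = m → IsJordanSet G A) :
    IsPreprimitive G Ω := by
  refine ⟨fun {B} hB => or_iff_not_imp_left.2 fun hB₂ => ?_⟩
  obtain ⟨x, hx, y, hy, hxy⟩ := not_subsingleton_iff.1 hB₂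
  by_contra hB'
  obtain ⟨z, hz⟩ := (ne_univ_iff_exists_notMem B).1 hB'
  obtain ⟨A, hxzA, hAy, hA⟩ : ∃ A : Set Ω, {x, z} ⊆ A ∧ A ⊆ {y}ᶜ ∧ A.ncard = m := by
    apply exists_subsuperset_card_eq
    · rintro _ (rfl | rfl)
      exacts [hxy, fun h => hz (h ▸ hy)]
    · exact (ncard_insert_le x {z}).trans (by rw [ncard_singleton]; lia)
    · rw [ncard_compl, ncard_singleton]
      exact Nat.le_sub_one_of_lt hmΩ
  obtain ⟨g, hg, rfl⟩ := hJ A hA x (hxzA (by simp)) z (hxzA (by simp))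
  have hgy : g • y = y := (mem_fixingSubgroup_iff G).1 hg y fun h => hAy h rfl
  have hgB : g • B = B := isBlock_iff_smul_eq_of_mem.1 hB hy (hgy.symm ▸ hy)
  exact hz (hgB ▸ smul_mem_smul_set hx)

end Finite

/-- Up to a permutation disjoint from `σ`, `τ` is the transposition of `a` and `τ a`. -/
theorem isThreeCycle_commutatorElement {α : Type*} [Fintype α] [DecidableEq α] {σ τ : Perm α}
    {a : α} (hσ : σ a ≠ a) (hτ : τ a ≠ a) (hστ : ∀ x, x ≠ a → σ x = x ∨ τ x = x) :
    ⁅σ, τ⁆.IsThreeCycle := by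
  obtain ⟨b, hb⟩ : ∃ b, τ a = b := ⟨_, rfl⟩
  rw [hb] at hτ
  have hτb : τ b ≠ b := fun h => hτ (τ.injective (h.trans hb.symm))
  have hσb : σ b = b := (hστ b hτ).resolve_right hτb
  have hne : b ≠ σ a := fun h => hτ (σ.injective (hσb.trans h))
  obtain ⟨ρ, hρ⟩ : ∃ ρ, τ = swap a b * ρ := ⟨swap a b * τ, by simp⟩
  have hdisj : Perm.Disjoint σ ρ := by
    intro x
    have hρx : ρ x = swap a b (τ x) := by simp [hρ]
    rcases eq_or_ne x a with rfl | hx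
    · simp [hρx, hb]
    · refine (hστ x hx).imp_right fun h => ?_
      rw [hρx, h, swap_apply_of_ne_of_ne hx]
      rintro rfl
      exact hτb h
  have hcomm : ρ * σ⁻¹ * ρ⁻¹ = σ⁻¹ := by
    rw [mul_inv_eq_iff_eq_mul]
    exact hdisj.commute.inv_left.eq.symm
  have hcommutator : ⁅σ, τ⁆ = swap b (σ a) * swap b a := by
    calc ⁅σ, τ⁆ = σ * swap a b * (ρ * σ⁻¹ * ρ⁻¹) * (swap a b)⁻¹ := by
          rw [commutatorElement_def, hρ]; group
      _ = swap (σ a) (σ b) * swap a b := by rw [hcomm, swap_inv, swap_apply_apply]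
      _ = swap b (σ a) * swap b a := by rw [hσb, swap_comm, swap_comm a]
  rw [hcommutator]
  exact Perm.isThreeCycle_swap_mul_swap_same hne hτ hσ

variable {α : Type*} [Fintype α] [DecidableEq α] {H : Subgroup (Perm α)}

theorem alternatingGroup_le_of_isJordanSet_of_ncard_eq [IsPretransitive H α] {m : ℕ}
    (hm : 1 < m) (hmα : 2 * m ≤ Nat.card α + 1)
    (hJ : ∀ A : Set α, A.ncard = m → IsJordanSet H A) : alternatingGroup α ≤ H := by
  obtain ⟨A, -, hA⟩ := exists_subset_card_eq (s := (univ : Set α)) (n := m)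
    (by rw [ncard_univ]; lia)
  obtain ⟨a, ha, a', ha', haa'⟩ := (one_lt_ncard (toFinite A)).1 (hA ▸ hm)
  obtain ⟨B, haB, hBA, hB⟩ : ∃ B : Set α, {a} ⊆ B ∧ B ⊆ insert a Aᶜ ∧ B.ncard = m := by
    apply exists_subsuperset_card_eq
    · simp
    · rw [ncard_singleton]; lia
    · rw [ncard_insert_of_notMem (by simpa), ncard_compl]; lia
  obtain ⟨b', hb', hab'⟩ := exists_ne_of_one_lt_ncard (hB ▸ hm) a
  obtain ⟨σ, hσ, hσa⟩ := hJ A hA a ha a' ha'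
  obtain ⟨τ, hτ, hτa⟩ := hJ B hB a (haB rfl) b' hb'
  have hcycle : ⁅(σ : Perm α), (τ : Perm α)⁆.IsThreeCycle := by
    refine isThreeCycle_commutatorElement (a := a) (hσa.trans_ne haa'.symm)
      (hτa.trans_ne hab') fun x hx => ?_
    by_cases hxA : x ∈ A
    · exact .inr ((mem_fixingSubgroup_iff H).1 hτ x fun hxB => (hBA hxB).elim hx (· hxA))
    · exact .inl ((mem_fixingSubgroup_iff H).1 hσ x hxA)
  have := isPreprimitive_of_isJordanSet_of_ncard_eq hm (by lia) hJ
  exact Perm.alternatingGroup_le_of_isPreprimitive_of_isThreeCycle_mem this hcycle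
    (H.mul_mem (H.mul_mem (H.mul_mem σ.2 τ.2) (H.inv_mem σ.2)) (H.inv_mem τ.2))

theorem alternatingGroup_le_of_isJordanSet [IsPretransitive H α] {A : Set α}
    (hA : IsJordanSet H A) (hA' : IsJordanSet H Aᶜ) (h1 : 1 < A.ncard) (h1' : 1 < Aᶜ.ncard)
    (hco : A.ncard.Coprime Aᶜ.ncard) : alternatingGroup α ≤ H := by
  wlog hle : A.ncard ≤ Aᶜ.ncard generalizing A
  · refine this hA' ?_ h1' ?_ ?_ ?_ <;> rw [compl_compl]
    exacts [hA, h1, hco.symm, le_of_not_ge hle]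
  have hcard := ncard_add_ncard_compl A
  refine alternatingGroup_le_of_isJordanSet_of_ncard_eq h1 (by lia) fun B hB => ?_
  exact hA.of_ncard_eq hA' (nonempty_of_ncard_ne_zero (by lia)) (nonempty_of_ncard_ne_zero (by lia))
    hco hB

end JordanSets

section Irreducibility

variable {k : Type*} [Field k] {g : k[X]} {b : k} {s : ℕ}

/-- Eisenstein's criterion at the prime `X - b`, which divides `g` exactly once. -/
theorem irreducible_X_pow_add_C_of_simple_root (hb : g.IsRoot b) (hb' : g.derivative.eval b ≠ 0)
    (hs : s ≠ 0) : Irreducible (X ^ s + C g : k[X][X]) := by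
  have hmonic : (X ^ s + C g : k[X][X]).Monic := monic_X_pow_add_C g hs
  have hprime : (Ideal.span {X - C b}).IsPrime :=
    (Ideal.span_singleton_prime (X_sub_C_ne_zero b)).2 (prime_X_sub_C b)
  refine (hmonic.isEisensteinAt_of_mem_of_notMem hprime.ne_top ?_ ?_).irreducible hprime
    hmonic.isPrimitive (by rw [natDegree_X_pow_add_C]; lia)
  · intro i hi
    rw [natDegree_X_pow_add_C] at hi
    rw [coeff_add, coeff_X_pow, if_neg hi.ne, zero_add, coeff_C]
    split_ifs
    · rwa [Ideal.mem_span_singleton, dvd_iff_isRoot]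
    · exact zero_mem _
  · rw [coeff_add, coeff_X_pow, if_neg hs.symm, zero_add, coeff_C_zero,
      Ideal.span_singleton_pow, Ideal.mem_span_singleton]
    rintro ⟨q, rfl⟩
    exact hb' (by simp [derivative_mul, derivative_pow])

theorem irreducible_map_add_C_X_pow_of_simple_root (hg : g.Monic) (hb : g.IsRoot b)
    (hb' : g.derivative.eval b ≠ 0) (hs : s ≠ 0) :
    Irreducible (g.map (algebraMap k (RatFunc k)) + C (RatFunc.X ^ s)) := by
  have hirr := irreducible_X_pow_add_C_of_simple_root hb hb' hs
  have hswap : Bivariate.swap (X ^ s + C g : k[X][X]) = g.map C + C (X ^ s) := by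
    rw [map_add, map_pow, Bivariate.swap_Y, Bivariate.swap_C, C_pow, add_comm]
  rw [← MulEquiv.irreducible_iff (Bivariate.swap (R := k)), hswap] at hirr
  have hdeg : (C (X ^ s) : k[X][X]).degree < (g.map C).degree := by
    rw [degree_map]
    exact degree_C_le.trans_lt (degree_pos_of_root hg.ne_zero hb)
  have hmonic : (g.map C + C (X ^ s) : k[X][X]).Monic := (hg.map C).add_of_left hdeg
  rw [hmonic.irreducible_iff_irreducible_map_fraction_map (K := RatFunc k)] at hirr
  rwa [Polynomial.map_add, map_C, Polynomial.map_map, map_pow, RatFunc.algebraMap_X] at hirr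

end Irreducibility

section Discriminant

variable {K : Type*} [Field K]

open Equiv Finset

theorem exists_sq_prod_sub_eq_prod_eval_derivative {n : ℕ} (v : Fin n → K) :
    ∃ m : ℕ, (∏ i, ∏ j ∈ Ioi i, (v i - v j)) ^ 2 =
      (-1) ^ m * ∏ i, eval (v i) (derivative (Lagrange.nodal univ v)) := by
  refine ⟨∑ i : Fin n, #(Ioi i), ?_⟩
  have hderiv (i : Fin n) : eval (v i) (derivative (Lagrange.nodal univ v)) =
      ∏ j ∈ {i}ᶜ, (v i - v j) := by
    rw [Lagrange.eval_nodal_derivative_eval_node_eq (mem_univ i), Lagrange.eval_nodal,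
      compl_eq_univ_sdiff, sdiff_singleton_eq_erase]
  simp_rw [hderiv, ← prod_prod_Ioi_mul_eq_prod_prod_off_diag fun i j => v j - v i,
    ← prod_pow_eq_pow_sum, ← prod_pow, ← prod_mul_distrib, ← prod_const]
  refine prod_congr rfl fun i _ => ?_
  rw [← prod_mul_distrib]
  exact prod_congr rfl fun j _ => by ring

variable {Ω : Type*} [Fintype Ω] [DecidableEq Ω]

theorem sign_eq_one_of_prod_eval_derivative_eq_sq (h2 : (2 : K) ≠ 0) {v : Ω → K}
    (hv : Function.Injective v) {π : Perm Ω} {σ : K →+* K} (hσ : ∀ i, σ (v i) = v (π i)) {ι d : K}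
    (hι : ι ^ 2 = -1) (hσι : σ ι = ι) (hσd : σ d = d)
    (hd : ∏ i, eval (v i) (derivative (Lagrange.nodal univ v)) = d ^ 2) : π.sign = 1 := by
  let e := Fintype.equivFin Ω
  let w := v ∘ e.symm
  have hw : Function.Injective w := hv.comp e.symm.injective
  set δ := ∏ i, ∏ j ∈ Ioi i, (w i - w j)
  have hδ0 : δ ≠ 0 := prod_ne_zero_iff.2 fun i _ => prod_ne_zero_iff.2 fun j hj =>
    sub_ne_zero.2 (hw.ne (mem_Ioi.1 hj).ne)
  have hδsign : σ δ = (π.sign : ℤ) * δ := by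
    rw [← Perm.sign_permCongr e, ← (e.permCongr π).prod_Ioi_comp_eq_sign_mul_prod
      (f := fun i j => w i - w j) (by simp)]
    simp [δ, w, map_prod, hσ]
  have hδfix : σ δ = δ := by
    obtain ⟨m, hm⟩ := exists_sq_prod_sub_eq_prod_eval_derivative w
    have hnodal : Lagrange.nodal univ w = Lagrange.nodal univ v :=
      e.symm.prod_comp fun i => X - C (v i)
    have hprod : ∏ i, eval (w i) (derivative (Lagrange.nodal univ v)) = d ^ 2 :=
      (e.symm.prod_comp fun i => eval (v i) (derivative (Lagrange.nodal univ v))).trans hd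
    rw [hnodal, hprod, ← hι, ← pow_mul, mul_comm 2, pow_mul, ← mul_pow,
      sq_eq_sq_iff_eq_or_eq_neg] at hm
    rcases hm with hm | hm <;> simp [hm, hσι, hσd, δ]
  rcases Int.units_eq_one_or π.sign with h | h
  · exact h
  · rw [hδfix, h, Units.val_neg, Units.val_one, Int.cast_neg, Int.cast_one, neg_one_mul,
      eq_neg_iff_add_eq_zero, ← two_mul] at hδsign
    exact absurd hδsign (mul_ne_zero h2 hδ0)

end Discriminant

/-- Abhyankar's trinomial `Y ^ n - a Y ^ t + x`, with `x` kept general so that the power `X ^ s` of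
the indeterminate can be read in `k(X)`, in `k⟦X⟧` or in a splitting field. -/
noncomputable def abhyankarPoly {R : Type*} [CommRing R] (n t : ℕ) (a x : R) : R[X] :=
  X ^ n - C a * X ^ t + C x

namespace abhyankarPoly

variable {R S : Type*} [CommRing R] [CommRing S] {n t : ℕ} {a x : R}

theorem eq_trinomial : abhyankarPoly n t a x = trinomial 0 t n x (-a) 1 := by
  simp only [abhyankarPoly, trinomial_def, pow_zero, mul_one, C_neg, C_1]
  ring

theorem monic (ht : 0 < t) (htn : t < n) : (abhyankarPoly n t a x).Monic := by
  rw [eq_trinomial]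
  exact trinomial_monic ht htn

theorem natDegree_eq [Nontrivial R] (ht : 0 < t) (htn : t < n) :
    (abhyankarPoly n t a x).natDegree = n := by
  rw [eq_trinomial]
  exact trinomial_natDegree ht htn one_ne_zero

theorem map_eq (φ : R →+* S) :
    (abhyankarPoly n t a x).map φ = abhyankarPoly n t (φ a) (φ x) := by
  simp [abhyankarPoly]

theorem eval_eq (y : R) : (abhyankarPoly n t a x).eval y = y ^ n - a * y ^ t + x := by
  simp [abhyankarPoly]

theorem eval_derivative_eq (y : R) :
    (derivative (abhyankarPoly n t a x)).eval y = n * y ^ (n - 1) - a * (t * y ^ (t - 1)) := by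
  simp [abhyankarPoly, derivative_X_pow]

theorem eval_derivative_of_pow_eq (htn : t < n) {y : R} (hy : y ^ (n - t) = a) :
    (derivative (abhyankarPoly n t a x)).eval y = (n - t : ℕ) * y ^ (n - 1) := by
  rw [eval_derivative_eq, Nat.cast_sub htn.le]
  rcases t.eq_zero_or_pos with rfl | ht
  · simp
  · rw [← hy, mul_left_comm, ← pow_add, Nat.sub_add_sub_cancel htn.le ht, sub_mul]

theorem prod_eval_derivative {K Ω : Type*} [Field K] {a x : K} [Fintype Ω] {v : Ω → K}
    (ht : 0 < t) (htn : t < n) (hn : (n : K) = 0)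
    (hv : Lagrange.nodal Finset.univ v = abhyankarPoly n t a x) :
    ∏ i, eval (v i) (derivative (Lagrange.nodal Finset.univ v)) =
      (-a * t) ^ n * ((-1) ^ n * x) ^ (t - 1) := by
  have hcard : Fintype.card Ω = n := by
    rw [← natDegree_eq (a := a) (x := x) ht htn, ← hv, Lagrange.natDegree_nodal, Finset.card_univ]
  have hprod : ∏ i, v i = (-1) ^ n * x := by
    have h0 := congrArg (eval 0) hv
    rw [Lagrange.eval_nodal, eval_eq, zero_pow ht.ne', zero_pow (ht.trans htn).ne'] at h0
    simp only [zero_sub, Finset.prod_neg, Finset.card_univ, hcard, mul_zero, neg_zero,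
      zero_add] at h0
    rw [← h0, ← mul_assoc, ← mul_pow, neg_one_mul, neg_neg, one_pow, one_mul]
  have hderiv (i : Ω) : eval (v i) (derivative (Lagrange.nodal Finset.univ v)) =
      -a * t * v i ^ (t - 1) := by
    rw [hv, eval_derivative_eq, hn]
    ring
  simp_rw [hderiv, Finset.prod_mul_distrib, Finset.prod_const, Finset.prod_pow, hprod,
    Finset.card_univ, hcard, mul_pow]

theorem irreducible {k : Type*} [Field k] {a b : k} {s : ℕ} (ht : 0 < t) (htn : t < n) (hs : s ≠ 0)
    (hb0 : b ≠ 0) (hb : b ^ (n - t) = a) (hnt : ((n - t : ℕ) : k) ≠ 0) :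
    Irreducible (abhyankarPoly n t (RatFunc.C a) (RatFunc.X ^ s)) := by
  have hroot : (abhyankarPoly n t a 0).IsRoot b := by
    rw [IsRoot.def, eval_eq, ← hb, ← pow_add, Nat.sub_add_cancel htn.le, sub_self, zero_add]
  have hsimple : (derivative (abhyankarPoly n t a 0)).eval b ≠ 0 := by
    rw [eval_derivative_of_pow_eq htn hb]
    exact mul_ne_zero hnt (pow_ne_zero _ hb0)
  have hirr := irreducible_map_add_C_X_pow_of_simple_root (monic ht htn) hroot hsimple hs
  rwa [map_eq, map_zero, abhyankarPoly, C_0, add_zero, RatFunc.algebraMap_eq_C] at hirr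

end abhyankarPoly

section PowerSeriesRoots

open PowerSeries (rescale)
open scoped PowerSeries

variable {k : Type*} [Field k] {n t e : ℕ} {a : k}

theorem exists_powerSeries_isRoot {F : k⟦X⟧[X]} (hF : F.Monic) {b : k}
    (hb : (F.map PowerSeries.constantCoeff).IsRoot b)
    (hb' : (derivative (F.map PowerSeries.constantCoeff)).eval b ≠ 0) :
    ∃ y : k⟦X⟧, F.IsRoot y ∧ PowerSeries.constantCoeff y = b := by
  have hH : HenselianRing k⟦X⟧ (Ideal.span {PowerSeries.X}) := inferInstance
  have hcoeff (G : k⟦X⟧[X]) :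
      PowerSeries.constantCoeff (G.eval (PowerSeries.C b)) =
        (G.map PowerSeries.constantCoeff).eval b := by
    rw [eval_map, ← eval₂_hom, PowerSeries.constantCoeff_C]
  obtain ⟨y, hy, hyb⟩ := hH.is_henselian F hF (PowerSeries.C b)
    (by rw [Ideal.mem_span_singleton, PowerSeries.X_dvd_iff, hcoeff, hb.eq_zero])
    (IsUnit.map _ (by
      rw [PowerSeries.isUnit_iff_constantCoeff, hcoeff, ← derivative_map]
      exact isUnit_iff_ne_zero.2 hb'))
  refine ⟨y, hy, ?_⟩
  rwa [Ideal.mem_span_singleton, PowerSeries.X_dvd_iff, map_sub, PowerSeries.constantCoeff_C,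
    sub_eq_zero] at hyb

theorem abhyankarPoly.exists_powerSeries_isRoot {b : k} {x : k⟦X⟧} (ht : 0 < t) (htn : t < n)
    (ha : a ≠ 0) (hnt : ((n - t : ℕ) : k) ≠ 0) (hx : PowerSeries.constantCoeff x = 0)
    (hb : b ^ (n - t) = a) :
    ∃ y : k⟦X⟧, (abhyankarPoly n t (PowerSeries.C a) x).IsRoot y ∧
      PowerSeries.constantCoeff y = b := by
  have hb0 : b ≠ 0 := by
    rintro rfl
    exact ha (by rw [← hb, zero_pow (Nat.sub_ne_zero_of_lt htn)])
  refine AbhyankarTrinomial.exists_powerSeries_isRoot (monic ht htn) ?_ ?_ <;>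
    rw [map_eq, PowerSeries.constantCoeff_C, hx]
  · rw [IsRoot.def, eval_eq, ← hb, ← pow_add, Nat.sub_add_cancel htn.le, sub_self, zero_add]
  · rw [eval_derivative_of_pow_eq htn hb]
    exact mul_ne_zero hnt (pow_ne_zero _ hb0)

/-- The substitution `y = x / z` exchanges the exponents `t` and `n - t`. -/
theorem abhyankarPoly.isRoot_mul_of_mul_eq_one {R : Type*} [CommRing R] {a x z u : R}
    (htn : t ≤ n) (hzu : z * u = 1)
    (hz : (abhyankarPoly n (n - t) a (x ^ (n - t))).IsRoot z) :
    (abhyankarPoly n t a (x ^ t)).IsRoot (x * u) := by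
  obtain ⟨m, rfl⟩ := Nat.exists_eq_add_of_le htn
  rw [Nat.add_sub_cancel_left, IsRoot.def, eval_eq] at hz
  rw [IsRoot.def, eval_eq]
  calc (x * u) ^ (t + m) - a * (x * u) ^ t + x ^ t
      = (x * u) ^ (t + m) - a * (x * u) ^ t * (z * u) ^ m + x ^ t * (z * u) ^ (t + m) := by
        simp only [hzu, one_pow, mul_one]
    _ = x ^ t * u ^ (t + m) * (z ^ (t + m) - a * z ^ m + x ^ m) := by ring
    _ = 0 := by rw [hz, mul_zero]

theorem abhyankarPoly.exists_powerSeries_isRoot_coeff_eq {w : k} (ht : 0 < t) (htn : t < n)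
    (he : 0 < e) (ha : a ≠ 0) (htk : (t : k) ≠ 0) (hw : w ^ t = a⁻¹) :
    ∃ y : k⟦X⟧, (abhyankarPoly n t (PowerSeries.C a) (PowerSeries.X ^ (t * e))).IsRoot y ∧
      PowerSeries.constantCoeff y = 0 ∧ PowerSeries.coeff e y = w := by
  have hnt : n - (n - t) = t := Nat.sub_sub_self htn.le
  have hw0 : w ≠ 0 := by
    rintro rfl
    exact inv_ne_zero ha (by rw [← hw, zero_pow ht.ne'])
  obtain ⟨z, hz, hz0⟩ := exists_powerSeries_isRoot (t := n - t) (n := n) (b := w⁻¹)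
    (x := (PowerSeries.X ^ e) ^ (n - t)) (by lia) (by lia) ha (by rwa [hnt])
    (by simp [he.ne', (Nat.sub_pos_of_lt htn).ne']) (by rw [hnt, inv_pow, hw, inv_inv])
  refine ⟨PowerSeries.X ^ e * z⁻¹, ?_, by simp [he.ne'], ?_⟩
  · rw [mul_comm t, pow_mul]
    exact isRoot_mul_of_mul_eq_one htn.le
      (PowerSeries.mul_inv_cancel z (by rw [hz0]; exact inv_ne_zero hw0)) hz
  · rw [PowerSeries.coeff_X_pow_mul', if_pos le_rfl, Nat.sub_self,
      PowerSeries.coeff_zero_eq_constantCoeff_apply,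
      PowerSeries.constantCoeff_inv, hz0, inv_inv]

/-- A labelling of roots of `Y ^ n - a Y ^ t + X ^ (t e)` in `k⟦X⟧` by their leading coefficients:
`t` roots `w X ^ e + ⋯` with `a w ^ t = 1` and `n - t` roots `b + ⋯` with `b ^ (n - t) = a`. -/
structure IsRootExpansion (n t e : ℕ) (a : k)
    (ρ : nthRootsFinset t a⁻¹ ⊕ nthRootsFinset (n - t) a → k⟦X⟧) : Prop where
  isRoot (i) : (abhyankarPoly n t (PowerSeries.C a) (PowerSeries.X ^ (t * e))).IsRoot (ρ i)
  constantCoeff_inl (w) : PowerSeries.constantCoeff (ρ (.inl w)) = 0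
  coeff_inl (w) : PowerSeries.coeff e (ρ (.inl w)) = w
  constantCoeff_inr (b) : PowerSeries.constantCoeff (ρ (.inr b)) = b

theorem exists_isRootExpansion (ht : 0 < t) (htn : t < n) (he : 0 < e) (ha : a ≠ 0)
    (htk : (t : k) ≠ 0) (hntk : ((n - t : ℕ) : k) ≠ 0) : ∃ ρ, IsRootExpansion n t e a ρ := by
  choose ρ₁ hroot₁ hconst₁ hcoeff₁ using fun w : nthRootsFinset t a⁻¹ =>
    abhyankarPoly.exists_powerSeries_isRoot_coeff_eq ht htn he ha htk
      ((mem_nthRootsFinset ht _).1 w.2)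
  choose ρ₂ hroot₂ hconst₂ using fun b : nthRootsFinset (n - t) a =>
    abhyankarPoly.exists_powerSeries_isRoot (x := PowerSeries.X ^ (t * e)) ht htn ha hntk
      (by simp [ht.ne', he.ne']) ((mem_nthRootsFinset (Nat.sub_pos_of_lt htn) _).1 b.2)
  exact ⟨Sum.elim ρ₁ ρ₂, Sum.rec hroot₁ hroot₂, hconst₁, hcoeff₁, hconst₂⟩

theorem ne_zero_of_mem_nthRootsFinset {m : ℕ} (hm : 0 < m) (ha : a ≠ 0) {b : k}
    (hb : b ∈ nthRootsFinset m a) : b ≠ 0 := by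
  rintro rfl
  rw [mem_nthRootsFinset hm, zero_pow hm.ne'] at hb
  exact ha hb.symm

theorem card_nthRootsFinset [IsAlgClosed k] {m : ℕ} (hm : (m : k) ≠ 0) (ha : a ≠ 0) :
    (nthRootsFinset m a).card = m := by
  rw [nthRootsFinset_def, nthRoots,
    Multiset.toFinset_card_of_nodup (nodup_roots (separable_X_pow_sub_C a hm ha)),
    ← (IsAlgClosed.splits _).natDegree_eq_card_roots, natDegree_X_pow_sub_C]

theorem card_nthRootsFinset_sum [IsAlgClosed k] (htn : t ≤ n) (ha : a ≠ 0) (htk : (t : k) ≠ 0)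
    (hntk : ((n - t : ℕ) : k) ≠ 0) :
    Fintype.card (nthRootsFinset t a⁻¹ ⊕ nthRootsFinset (n - t) a) = n := by
  rw [Fintype.card_sum, Fintype.card_coe, Fintype.card_coe,
    card_nthRootsFinset htk (inv_ne_zero ha), card_nthRootsFinset hntk ha, Nat.add_sub_cancel' htn]

namespace IsRootExpansion

variable {ρ : nthRootsFinset t a⁻¹ ⊕ nthRootsFinset (n - t) a → k⟦X⟧}

/-- Comparing the coefficients of `1` and of `X ^ e` in `ρ i (μ X) = ν ρ j (X)`. -/
theorem exists_eq_inl_of_rescale_eq (hρ : IsRootExpansion n t e a ρ) (htn : t < n) (ha : a ≠ 0)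
    {μ ν : k} (hν : ν ≠ 0) {w : nthRootsFinset t a⁻¹}
    {j : nthRootsFinset t a⁻¹ ⊕ nthRootsFinset (n - t) a}
    (h : rescale μ (ρ (.inl w)) = PowerSeries.C ν * ρ j) :
    ∃ w' : nthRootsFinset t a⁻¹, j = .inl w' ∧ μ ^ e * w = ν * w' := by
  have hcoeff (m : ℕ) :
      μ ^ m * PowerSeries.coeff m (ρ (.inl w)) = ν * PowerSeries.coeff m (ρ j) := by
    rw [← PowerSeries.coeff_rescale, h, PowerSeries.coeff_C_mul]
  rcases j with w' | b
  · exact ⟨w', rfl, by rw [← hρ.coeff_inl, hcoeff, hρ.coeff_inl]⟩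
  · have h0 := hcoeff 0
    simp only [PowerSeries.coeff_zero_eq_constantCoeff_apply] at h0
    rw [hρ.constantCoeff_inl, hρ.constantCoeff_inr, mul_zero] at h0
    exact absurd h0.symm
      (mul_ne_zero hν (ne_zero_of_mem_nthRootsFinset (Nat.sub_pos_of_lt htn) ha b.2))

theorem exists_eq_inr_of_rescale_eq (hρ : IsRootExpansion n t e a ρ) (htn : t < n) (ha : a ≠ 0)
    {μ ν : k} {b : nthRootsFinset (n - t) a} {j : nthRootsFinset t a⁻¹ ⊕ nthRootsFinset (n - t) a}
    (h : rescale μ (ρ (.inr b)) = PowerSeries.C ν * ρ j) :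
    ∃ b' : nthRootsFinset (n - t) a, j = .inr b' ∧ (b : k) = ν * b' := by
  have h0 := congrArg PowerSeries.constantCoeff h
  rw [map_mul, PowerSeries.constantCoeff_C, ← PowerSeries.coeff_zero_eq_constantCoeff_apply,
    PowerSeries.coeff_rescale, pow_zero, one_mul, PowerSeries.coeff_zero_eq_constantCoeff_apply,
    hρ.constantCoeff_inr] at h0
  rcases j with w | b'
  · rw [hρ.constantCoeff_inl, mul_zero] at h0
    exact absurd h0 (ne_zero_of_mem_nthRootsFinset (Nat.sub_pos_of_lt htn) ha b.2)
  · exact ⟨b', rfl, by rw [h0, hρ.constantCoeff_inr]⟩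

theorem injective (hρ : IsRootExpansion n t e a ρ) (htn : t < n) (ha : a ≠ 0) :
    Function.Injective ρ := by
  intro i j hij
  have h : rescale (1 : k) (ρ i) = PowerSeries.C 1 * ρ j := by simp [hij]
  rcases i with w | b
  · obtain ⟨w', rfl, hw⟩ := hρ.exists_eq_inl_of_rescale_eq htn ha one_ne_zero h
    rw [one_pow, one_mul, one_mul] at hw
    rw [Subtype.ext hw]
  · obtain ⟨b', rfl, hb⟩ := hρ.exists_eq_inr_of_rescale_eq htn ha h
    rw [one_mul] at hb
    rw [Subtype.ext hb]

end IsRootExpansion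

end PowerSeriesRoots

section Scalings

variable {k : Type*} [Field k] {L E F : Type*} [Field L] [Field E] [Field F]
  [Algebra (RatFunc k) L] [Algebra (RatFunc k) E] [Algebra (RatFunc k) F]

/-- A ring homomorphism between extensions of `k(X)` which restricts to the substitution
`X ↦ μ X` on `k(X)`. -/
structure IsScaling (μ : k) (σ : L →+* E) : Prop where
  map_C (c : k) :
    σ (algebraMap (RatFunc k) L (RatFunc.C c)) = algebraMap (RatFunc k) E (RatFunc.C c)
  map_X :
    σ (algebraMap (RatFunc k) L RatFunc.X) = algebraMap (RatFunc k) E (RatFunc.C μ * RatFunc.X)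

theorem isScaling_one_of_algHom (σ : L →ₐ[RatFunc k] E) : IsScaling (1 : k) (σ : L →+* E) where
  map_C _ := σ.commutes _
  map_X := by rw [map_one, one_mul]; exact σ.commutes _

theorem algebraMap_mem_of_X_mem {T : Subfield L}
    (hC : ∀ c : k, algebraMap (RatFunc k) L (RatFunc.C c) ∈ T)
    (hX : algebraMap (RatFunc k) L RatFunc.X ∈ T) (q : RatFunc k) :
    algebraMap (RatFunc k) L q ∈ T := by
  let T' : IntermediateField k (RatFunc k) :=
    (T.comap (algebraMap (RatFunc k) L)).toIntermediateField hC
  have htop : T' = ⊤ := by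
    rw [← top_le_iff, ← RatFunc.adjoin_X, IntermediateField.adjoin_simple_le_iff]
    exact hX
  exact (htop ▸ IntermediateField.mem_top : q ∈ T')

theorem mem_subfield_of_rootSet_subset {f : (RatFunc k)[X]} [IsSplittingField (RatFunc k) L f]
    {T : Subfield L} (hC : ∀ c : k, algebraMap (RatFunc k) L (RatFunc.C c) ∈ T)
    (hX : algebraMap (RatFunc k) L RatFunc.X ∈ T) (hf : f.rootSet L ⊆ T) (y : L) : y ∈ T := by
  let T' : IntermediateField (RatFunc k) L :=
    T.toIntermediateField (algebraMap_mem_of_X_mem hC hX)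
  have hle : Algebra.adjoin (RatFunc k) (f.rootSet L) ≤ T'.toSubalgebra := Algebra.adjoin_le hf
  rw [IsSplittingField.adjoin_rootSet] at hle
  exact hle Algebra.mem_top

namespace IsScaling

variable {μ ν : k}

theorem map_C_smul {σ : L →+* E} (hσ : IsScaling μ σ) (c : k) (y : L) :
    σ (RatFunc.C c • y) = RatFunc.C c • σ y := by
  rw [Algebra.smul_def, Algebra.smul_def, map_mul, hσ.map_C]

theorem comp {σ : E →+* F} {τ : L →+* E} (hσ : IsScaling μ σ) (hτ : IsScaling ν τ) :
    IsScaling (μ * ν) (σ.comp τ) where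
  map_C c := by rw [RingHom.comp_apply, hτ.map_C, hσ.map_C]
  map_X := by
    rw [RingHom.comp_apply, hτ.map_X, map_mul, map_mul, hσ.map_C, hσ.map_X, ← map_mul, ← mul_assoc,
      ← map_mul, mul_comm ν]

theorem symm {μ : kˣ} {σ : L ≃+* E} (hσ : IsScaling (μ : k) (σ : L →+* E)) :
    IsScaling ((μ⁻¹ : kˣ) : k) (σ.symm : E →+* L) where
  map_C c := σ.symm_apply_eq.2 (hσ.map_C c).symm
  map_X := by
    refine σ.symm_apply_eq.2 (.trans ?_
      (map_mul ((σ : L →+* E).comp (algebraMap (RatFunc k) L)) _ _).symm)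
    rw [RingHom.comp_apply, RingHom.comp_apply, hσ.map_C, hσ.map_X, ← map_mul, ← mul_assoc,
      ← map_mul, Units.inv_mul, map_one, one_mul]

theorem map_algebraMap {σ : L →+* E} (hσ : IsScaling (1 : k) σ) (q : RatFunc k) :
    σ (algebraMap (RatFunc k) L q) = algebraMap (RatFunc k) E q := by
  have hext : σ.comp (algebraMap (RatFunc k) L) = algebraMap (RatFunc k) E := by
    refine IsLocalization.ringHom_ext (nonZeroDivisors k[X]) (Polynomial.ringHom_ext ?_ ?_)
    · intro c
      simpa using hσ.map_C c
    · simpa using hσ.map_X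
  exact RingHom.congr_fun hext q

end IsScaling

variable {f : (RatFunc k)[X]}

/-- `π` is induced, up to the factor `ν`, by an automorphism of `L` over `k` that sends `X` to
`μ X`. -/
def IsScalingSymmetry (π : Equiv.Perm (f.rootSet L)) (μ ν : kˣ) : Prop :=
  ∃ σ : L ≃+* L, IsScaling (μ : k) (σ : L →+* L) ∧
    ∀ y : f.rootSet L, σ y = RatFunc.C (ν : k) • (π y : L)

namespace IsScalingSymmetry

variable {π π' : Equiv.Perm (f.rootSet L)} {μ μ' ν ν' : kˣ}

theorem one : IsScalingSymmetry (1 : Equiv.Perm (f.rootSet L)) 1 1 :=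
  ⟨RingEquiv.refl L, isScaling_one_of_algHom (AlgHom.id (RatFunc k) L), fun y => by simp⟩

theorem mul (h : IsScalingSymmetry π μ ν) (h' : IsScalingSymmetry π' μ' ν') :
    IsScalingSymmetry (π * π') (μ * μ') (ν * ν') := by
  obtain ⟨σ, hσ, hπ⟩ := h
  obtain ⟨σ', hσ', hπ'⟩ := h'
  refine ⟨σ'.trans σ, hσ.comp hσ', fun y => ?_⟩
  rw [RingEquiv.trans_apply, hπ', Units.val_mul, mul_comm, map_mul, mul_smul, Equiv.Perm.mul_apply,
    ← hπ]
  exact hσ.map_C_smul _ _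

theorem inv (h : IsScalingSymmetry π μ ν) : IsScalingSymmetry π⁻¹ μ⁻¹ ν⁻¹ := by
  obtain ⟨σ, hσ, hπ⟩ := h
  refine ⟨σ.symm, hσ.symm, fun y => σ.symm_apply_eq.2 ?_⟩
  refine .trans ?_ (hσ.map_C_smul _ _).symm
  rw [RingEquiv.coe_toRingHom, hπ, ← Equiv.Perm.mul_apply, mul_inv_cancel, Equiv.Perm.one_apply,
    smul_smul, ← map_mul, Units.inv_mul, map_one, one_smul]

theorem mem_range_galActionHom [Fact (f.map (algebraMap (RatFunc k) L)).Splits]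
    (h : IsScalingSymmetry π 1 1) : π ∈ (Gal.galActionHom f L).range := by
  obtain ⟨σ, hσ, hπ⟩ := h
  refine ⟨Gal.restrict f L (AlgEquiv.ofRingEquiv (f := σ) hσ.map_algebraMap), ?_⟩
  ext y
  rw [Gal.galActionHom_restrict]
  exact (hπ y).trans (by rw [Units.val_one, map_one, one_smul])

end IsScalingSymmetry

variable (L f) in
/-- The permutations of the roots of `f` induced, up to a scalar in `kˣ`, by the automorphisms of
`L` over `k` that send `X` to some `μ X`; the Galois group over `k(X)` acts through those with
`μ = 1` and trivial scalar. -/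
def extendedGaloisGroup : Subgroup (Equiv.Perm (f.rootSet L)) where
  carrier := {π | ∃ μ ν : kˣ, IsScalingSymmetry π μ ν}
  mul_mem' := fun ⟨_, _, h⟩ ⟨_, _, h'⟩ => ⟨_, _, h.mul h'⟩
  one_mem' := ⟨_, _, .one⟩
  inv_mem' := fun ⟨_, _, h⟩ => ⟨_, _, h.inv⟩

theorem exists_algEquiv_of_mem_range_galActionHom [Fact (f.map (algebraMap (RatFunc k) L)).Splits]
    [IsSplittingField (RatFunc k) L f] {π : Equiv.Perm (f.rootSet L)}
    (hπ : π ∈ (Gal.galActionHom f L).range) :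
    ∃ σ : L ≃ₐ[RatFunc k] L, ∀ y : f.rootSet L, σ y = π y := by
  obtain ⟨g, rfl⟩ := hπ
  have : Normal (RatFunc k) L := Normal.of_isSplittingField f
  obtain ⟨σ, rfl⟩ := Gal.restrict_surjective f L g
  exact ⟨σ, fun y => (Gal.galActionHom_restrict f L σ y).symm⟩

theorem range_galActionHom_le_extendedGaloisGroup
    [Fact (f.map (algebraMap (RatFunc k) L)).Splits] [IsSplittingField (RatFunc k) L f] :
    (Gal.galActionHom f L).range ≤ extendedGaloisGroup L f := by
  intro π hπ
  obtain ⟨σ, hσ⟩ := exists_algEquiv_of_mem_range_galActionHom hπ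
  exact ⟨1, 1, σ.toRingEquiv, isScaling_one_of_algHom (σ : L →ₐ[RatFunc k] L),
    fun y => by simp [hσ]⟩

theorem commutator_extendedGaloisGroup_le [Fact (f.map (algebraMap (RatFunc k) L)).Splits] :
    ⁅extendedGaloisGroup L f, extendedGaloisGroup L f⁆ ≤ (Gal.galActionHom f L).range := by
  rw [Subgroup.commutator_le]
  rintro π ⟨μ, ν, h⟩ π' ⟨μ', ν', h'⟩
  have hcomm := ((h.mul h').mul h.inv).mul h'.inv
  rw [mul_inv_cancel_comm, mul_inv_cancel_comm, mul_inv_cancel, mul_inv_cancel] at hcomm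
  exact hcomm.mem_range_galActionHom

theorem IsScaling.exists_comp_eq [IsSplittingField (RatFunc k) L f] {μ : k} {ψ : L →+* E}
    (hψ : IsScaling μ ψ) (φ : L →ₐ[RatFunc k] E) (hroot : ∀ y ∈ f.rootSet L, ψ y ∈ φ.fieldRange) :
    ∃ σ : L →+* L, IsScaling μ σ ∧ ∀ y, φ (σ y) = ψ y := by
  have hmem : ∀ y, ψ y ∈ φ.range :=
    mem_subfield_of_rootSet_subset (f := f) (T := φ.fieldRange.toSubfield.comap ψ)
      (fun c => ⟨_, (φ.commutes _).trans (hψ.map_C c).symm⟩)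
      ⟨_, (φ.commutes _).trans hψ.map_X.symm⟩ hroot
  let σ : L →+* L :=
    ((AlgEquiv.ofInjectiveField φ).symm : φ.range →+* L).comp (ψ.codRestrict φ.range hmem)
  have hφσ (y : L) : φ (σ y) = ψ y :=
    congrArg Subtype.val ((AlgEquiv.ofInjectiveField φ).apply_symm_apply ⟨ψ y, hmem y⟩)
  have hφ : Function.Injective φ := φ.toRingHom.injective
  refine ⟨σ, ⟨fun c => hφ ?_, hφ ?_⟩, hφσ⟩
  · rw [hφσ, hψ.map_C, φ.commutes]
  · rw [hφσ, hψ.map_X, φ.commutes]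

theorem IsScaling.isScalingSymmetry [IsSplittingField (RatFunc k) L f] {μ ν : kˣ} {σ : L →+* L}
    (hσ : IsScaling (μ : k) σ) {π : Equiv.Perm (f.rootSet L)}
    (hπ : ∀ y : f.rootSet L, σ y = RatFunc.C (ν : k) • (π y : L)) : IsScalingSymmetry π μ ν := by
  have hsurj : Function.Surjective σ := by
    refine mem_subfield_of_rootSet_subset (f := f) (T := σ.fieldRange)
      (fun c => ⟨_, hσ.map_C c⟩)
      ⟨RatFunc.C ((μ⁻¹ : kˣ) : k) • algebraMap (RatFunc k) L RatFunc.X, ?_⟩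
      fun y hy => ⟨RatFunc.C ((ν⁻¹ : kˣ) : k) • (π⁻¹ ⟨y, hy⟩ : L), ?_⟩
    · rw [hσ.map_C_smul, hσ.map_X, Algebra.smul_def, ← map_mul, ← mul_assoc, ← map_mul,
        Units.inv_mul, map_one, one_mul]
    · rw [hσ.map_C_smul, hπ, ← Equiv.Perm.mul_apply, mul_inv_cancel, Equiv.Perm.one_apply,
        smul_smul, ← map_mul, Units.inv_mul, map_one, one_smul]
  exact ⟨RingEquiv.ofBijective σ ⟨σ.injective, hsurj⟩, hσ, hπ⟩

theorem IsScaling.exists_isScalingSymmetry [IsSplittingField (RatFunc k) L f] {μ ν : kˣ}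
    {ψ : L →+* E} (hψ : IsScaling (μ : k) ψ) (φ : L →ₐ[RatFunc k] E)
    (hroot : ∀ y ∈ f.rootSet L, ∃ z ∈ f.rootSet L, ψ y = RatFunc.C (ν : k) • φ z) :
    ∃ π : Equiv.Perm (f.rootSet L), IsScalingSymmetry π μ ν ∧
      ∀ y : f.rootSet L, ψ y = RatFunc.C (ν : k) • φ (π y) := by
  choose z hz hψz using fun y : f.rootSet L => hroot y y.2
  have hinj : Function.Injective fun y : f.rootSet L => (⟨z y, hz y⟩ : f.rootSet L) := by
    intro y y' h
    refine Subtype.ext (ψ.injective ?_)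
    rw [hψz, hψz, show z y = z y' from Subtype.ext_iff.1 h]
  let π := Equiv.ofBijective _ (Finite.injective_iff_bijective.1 hinj)
  obtain ⟨σ, hσ, hφσ⟩ := hψ.exists_comp_eq φ fun y hy => by
    obtain ⟨z, -, hz⟩ := hroot y hy
    exact ⟨_, (map_smul φ _ z).trans hz.symm⟩
  refine ⟨π, hσ.isScalingSymmetry fun y => φ.toRingHom.injective ?_, hψz⟩
  exact (hφσ y).trans ((hψz y).trans (map_smul φ _ _).symm)

end Scalings

section Embedding

variable {K ι : Type*} [Field K] [Fintype ι]

theorem nodal_eq_of_monic {p : K[X]} (hp : p.Monic) {v : ι → K} (hv : Function.Injective v)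
    (hroot : ∀ i, p.IsRoot (v i)) (hcard : p.natDegree = Fintype.card ι) :
    Lagrange.nodal Finset.univ v = p := by
  refine (eq_of_monic_of_dvd_of_natDegree_le (Lagrange.nodal_monic) hp ?_ ?_).symm
  · exact Finset.prod_dvd_of_coprime ((pairwise_coprime_X_sub_C hv).set_pairwise _)
      fun i _ => dvd_iff_isRoot.2 (hroot i)
  · rw [Lagrange.natDegree_nodal, hcard, Finset.card_univ]

theorem nodal_rootSet_eq {L : Type*} [Field L] [Algebra K L] {f : K[X]} (hf : f.Monic)
    (hcard : Fintype.card (f.rootSet L) = f.natDegree) :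
    Lagrange.nodal Finset.univ ((↑) : f.rootSet L → L) = f.map (algebraMap K L) := by
  refine nodal_eq_of_monic (hf.map _) Subtype.val_injective (fun y => ?_) ?_
  · rw [IsRoot.def, eval_map_algebraMap]
    exact (mem_rootSet.1 y.2).2
  · rw [hf.natDegree_map, hcard]

theorem exists_algHom_equiv_rootSet_of_nodal_eq {L E : Type*} [Field L] [Field E] [Algebra K L]
    [Algebra K E] (f : K[X]) [IsSplittingField K L f] {v : ι → E} (hv : Function.Injective v)
    (h : Lagrange.nodal Finset.univ v = f.map (algebraMap K E)) :
    ∃ (φ : L →ₐ[K] E) (r : ι ≃ f.rootSet L), ∀ i, φ (r i) = v i := by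
  have hsplits : (f.map (algebraMap K E)).Splits :=
    h ▸ Splits.prod fun i _ => Splits.X_sub_C _
  have hf : f.map (algebraMap K E) ≠ 0 := h ▸ Lagrange.nodal_monic.ne_zero
  have hmem (y : E) : y ∈ f.rootSet E ↔ ∃ i, y = v i := by
    rw [mem_rootSet', ← eval_map_algebraMap, ← h, Lagrange.eval_nodal, Finset.prod_eq_zero_iff]
    simp [sub_eq_zero, h, hf]
  let φ : L →ₐ[K] E := IsSplittingField.lift L f hsplits
  have hφ : φ '' f.rootSet L = f.rootSet E := (IsSplittingField.splits L f).image_rootSet φ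
  choose r hr hφr using fun i => hφ.ge ((hmem (v i)).2 ⟨i, rfl⟩)
  refine ⟨φ, Equiv.ofBijective (fun i => (⟨r i, hr i⟩ : f.rootSet L)) ⟨fun i j hij => hv ?_, ?_⟩,
    hφr⟩
  · rw [← hφr, ← hφr, show r i = r j from Subtype.ext_iff.1 hij]
  · rintro ⟨y, hy⟩
    obtain ⟨i, hi⟩ := (hmem (φ y)).1 (hφ.le ⟨y, hy, rfl⟩)
    exact ⟨i, Subtype.ext (φ.toRingHom.injective ((hφr i).trans hi.symm))⟩

end Embedding

section LaurentSeriesScaling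

open PowerSeries (rescale)
open scoped PowerSeries LaurentSeries RatFunc

variable {k : Type*} [Field k]

theorem algebraMap_ratFunc_laurentSeries (p : k[X]) :
    algebraMap (RatFunc k) k⸨X⸩ (algebraMap k[X] (RatFunc k) p) =
      algebraMap k⟦X⟧ k⸨X⸩ (p : k⟦X⟧) :=
  (RatFunc.coe_coe p).symm

theorem algebraMap_ratFunc_laurentSeries_C (c : k) :
    algebraMap (RatFunc k) k⸨X⸩ (RatFunc.C c) = algebraMap k⟦X⟧ k⸨X⸩ (PowerSeries.C c) := by
  rw [← RatFunc.algebraMap_C, algebraMap_ratFunc_laurentSeries, Polynomial.coe_C]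

theorem algebraMap_ratFunc_laurentSeries_X :
    algebraMap (RatFunc k) k⸨X⸩ RatFunc.X = algebraMap k⟦X⟧ k⸨X⸩ PowerSeries.X := by
  rw [← RatFunc.algebraMap_X, algebraMap_ratFunc_laurentSeries, Polynomial.coe_X]

theorem rescale_C (μ c : k) : rescale μ (PowerSeries.C c) = PowerSeries.C c := by
  ext m
  rw [PowerSeries.coeff_rescale, PowerSeries.coeff_C]
  rcases eq_or_ne m 0 with rfl | hm
  · rw [pow_zero, one_mul]
  · rw [if_neg hm, mul_zero]

theorem exists_isScaling_laurentSeries (μ : kˣ) :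
    ∃ S : k⸨X⸩ →+* k⸨X⸩, IsScaling (μ : k) S ∧
      ∀ P : k⟦X⟧, S (algebraMap k⟦X⟧ k⸨X⸩ P) = algebraMap k⟦X⟧ k⸨X⸩ (rescale (μ : k) P) := by
  have hinj : Function.Injective
      ((algebraMap k⟦X⟧ k⸨X⸩).comp (rescale (μ : k))) :=
    (FaithfulSMul.algebraMap_injective _ _).comp (PowerSeries.rescale_injective μ.ne_zero)
  have hS (P : k⟦X⟧) : IsFractionRing.lift hinj (algebraMap k⟦X⟧ k⸨X⸩ P) =
      algebraMap k⟦X⟧ k⸨X⸩ (rescale (μ : k) P) := IsFractionRing.lift_algebraMap hinj P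
  refine ⟨IsFractionRing.lift hinj, ⟨fun c => ?_, ?_⟩, hS⟩
  · rw [algebraMap_ratFunc_laurentSeries_C, hS, rescale_C]
  · rw [map_mul, algebraMap_ratFunc_laurentSeries_C, algebraMap_ratFunc_laurentSeries_X, hS,
      PowerSeries.rescale_X, map_mul]

end LaurentSeriesScaling

namespace abhyankarPoly

variable {n t s : ℕ}

theorem eval_mul_of_pow_eq_one {R : Type*} [CommRing R] {a x ν : R} (htn : t ≤ n)
    (hν : ν ^ (n - t) = 1) (y : R) :
    (abhyankarPoly n t a (ν ^ t * x)).eval (ν * y) =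
      ν ^ t * (abhyankarPoly n t a x).eval y := by
  have hνn : ν ^ n = ν ^ t := by rw [← Nat.add_sub_cancel' htn, pow_add, hν, mul_one]
  rw [eval_eq, eval_eq, mul_pow, mul_pow, hνn]
  ring

theorem aeval_eq {R A : Type*} [CommRing R] [CommRing A] [Algebra R A] {a x : R} (y : A) :
    aeval y (abhyankarPoly n t a x) = y ^ n - algebraMap R A a * y ^ t + algebraMap R A x := by
  rw [← eval_map_algebraMap, map_eq, eval_eq]

variable {k L E : Type*} [Field k] [Field L] [Field E] [Algebra (RatFunc k) L]
  [Algebra (RatFunc k) E] {a : k} {μ : k}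

theorem map_aeval_eq {ψ : L →+* E} (hψ : IsScaling μ ψ) (y : L) :
    ψ (aeval y (abhyankarPoly n t (RatFunc.C a) (RatFunc.X ^ s))) =
      (abhyankarPoly n t (algebraMap (RatFunc k) E (RatFunc.C a))
        (algebraMap (RatFunc k) E (RatFunc.C (μ ^ s) * RatFunc.X ^ s))).eval (ψ y) := by
  rw [map_pow RatFunc.C, ← mul_pow, aeval_eq, eval_eq]
  simp only [map_add, map_sub, map_mul ψ, map_pow ψ, map_pow (algebraMap (RatFunc k) _), hψ.map_C,
    hψ.map_X]

theorem exists_mem_rootSet_eq_smul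
    [IsSplittingField (RatFunc k) L (abhyankarPoly n t (RatFunc.C a) (RatFunc.X ^ s))]
    (ht : 0 < t) (htn : t < n) {ν : kˣ} (hν : (ν : k) ^ (n - t) = 1) (hμν : μ ^ s = ν ^ t)
    {ψ : L →+* E} (hψ : IsScaling μ ψ) (φ : L →ₐ[RatFunc k] E) {y : L}
    (hy : y ∈ (abhyankarPoly n t (RatFunc.C a) (RatFunc.X ^ s)).rootSet L) :
    ∃ z ∈ (abhyankarPoly n t (RatFunc.C a) (RatFunc.X ^ s)).rootSet L,
      ψ y = RatFunc.C (ν : k) • φ z := by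
  set f := abhyankarPoly n t (RatFunc.C a) (RatFunc.X ^ s)
  let c := (algebraMap (RatFunc k) E).comp RatFunc.C
  have hcν : c ν ≠ 0 := (map_ne_zero c).2 ν.ne_zero
  obtain ⟨w, hw⟩ : ∃ w : E, ψ y = c ν * w := ⟨(c ν)⁻¹ * ψ y, (mul_inv_cancel_left₀ hcν _).symm⟩
  have hwf : c ν ^ t * aeval w f = 0 := by
    rw [← eval_map_algebraMap, map_eq, ← map_zero ψ, ← (mem_rootSet.1 hy).2, map_aeval_eq hψ, hw,
      hμν, map_mul, map_pow RatFunc.C, map_pow (algebraMap (RatFunc k) E) (RatFunc.C _)]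
    refine (eval_mul_of_pow_eq_one htn.le ?_ w).symm.trans ?_
    · rw [← map_pow, hν, map_one]
    · rfl
  have hwmem : w ∈ f.rootSet E := mem_rootSet.2
    ⟨(monic ht htn).ne_zero, (mul_eq_zero.1 hwf).resolve_left (pow_ne_zero t hcν)⟩
  obtain ⟨z, hz, rfl⟩ := ((IsSplittingField.splits L f).image_rootSet φ).ge hwmem
  exact ⟨z, hz, hw.trans (Algebra.smul_def _ _).symm⟩

end abhyankarPoly

section Labelling

open PowerSeries (rescale)
open scoped PowerSeries LaurentSeries RatFunc

variable {k : Type*} [Field k] {n t e : ℕ} {a : k}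
  {ρ : nthRootsFinset t a⁻¹ ⊕ nthRootsFinset (n - t) a → k⟦X⟧}

theorem IsRootExpansion.nodal_eq [IsAlgClosed k] (hρ : IsRootExpansion n t e a ρ) (ht : 0 < t)
    (htn : t < n) (ha : a ≠ 0) (htk : (t : k) ≠ 0) (hntk : ((n - t : ℕ) : k) ≠ 0) :
    Lagrange.nodal Finset.univ (algebraMap k⟦X⟧ k⸨X⸩ ∘ ρ) =
      (abhyankarPoly n t (RatFunc.C a) (RatFunc.X ^ (t * e))).map
        (algebraMap (RatFunc k) k⸨X⸩) := by
  have hmap : (abhyankarPoly n t (RatFunc.C a) (RatFunc.X ^ (t * e))).map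
      (algebraMap (RatFunc k) k⸨X⸩) =
      (abhyankarPoly n t (PowerSeries.C a) (PowerSeries.X ^ (t * e))).map
        (algebraMap k⟦X⟧ k⸨X⸩) := by
    rw [abhyankarPoly.map_eq, abhyankarPoly.map_eq, algebraMap_ratFunc_laurentSeries_C, map_pow,
      map_pow, algebraMap_ratFunc_laurentSeries_X]
  refine nodal_eq_of_monic ((abhyankarPoly.monic ht htn).map _)
    ((FaithfulSMul.algebraMap_injective _ _).comp (hρ.injective htn ha)) (fun i => ?_) ?_
  · rw [hmap]
    exact (hρ.isRoot i).map
  · rw [abhyankarPoly.map_eq, abhyankarPoly.natDegree_eq ht htn,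
      card_nthRootsFinset_sum htn.le ha htk hntk]

variable {L : Type*} [Field L] [Algebra (RatFunc k) L] {f : (RatFunc k)[X]}
  [IsSplittingField (RatFunc k) L f]
  {φ : L →ₐ[RatFunc k] k⸨X⸩} {r : nthRootsFinset t a⁻¹ ⊕ nthRootsFinset (n - t) a ≃ f.rootSet L}

theorem exists_isScalingSymmetry_rescale_eq (ht : 0 < t) (htn : t < n)
    (hf : f = abhyankarPoly n t (RatFunc.C a) (RatFunc.X ^ (t * e)))
    (hr : ∀ i, φ (r i) = algebraMap k⟦X⟧ k⸨X⸩ (ρ i)) {μ ν : kˣ} (hν : (ν : k) ^ (n - t) = 1)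
    (hμν : (μ : k) ^ (t * e) = ν ^ t) :
    ∃ π : Equiv.Perm (f.rootSet L), IsScalingSymmetry π μ ν ∧
      ∀ i, ∃ j, π (r i) = r j ∧ rescale (μ : k) (ρ i) = PowerSeries.C (ν : k) * ρ j := by
  subst hf
  obtain ⟨S, hS, hSρ⟩ := exists_isScaling_laurentSeries μ
  have hψ : IsScaling (μ : k) (S.comp (φ : L →+* k⸨X⸩)) := by
    simpa using hS.comp (isScaling_one_of_algHom φ)
  obtain ⟨π, hπ, hψπ⟩ := hψ.exists_isScalingSymmetry φ fun y hy =>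
    abhyankarPoly.exists_mem_rootSet_eq_smul (a := a) ht htn hν hμν hψ φ hy
  refine ⟨π, hπ, fun i => ?_⟩
  obtain ⟨j, hj⟩ := r.surjective (π (r i))
  refine ⟨j, hj.symm, FaithfulSMul.algebraMap_injective k⟦X⟧ k⸨X⸩ ?_⟩
  rw [← hSρ, ← hr, map_mul, ← hr, hj, ← algebraMap_ratFunc_laurentSeries_C, ← Algebra.smul_def]
  exact hψπ (r i)

theorem exists_mem_extendedGaloisGroup_apply_eq [IsAlgClosed k]
    (hρ : IsRootExpansion n t e a ρ) (ht : 0 < t) (htn : t < n) (he : 0 < e) (ha : a ≠ 0)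
    (hf : f = abhyankarPoly n t (RatFunc.C a) (RatFunc.X ^ (t * e)))
    (hr : ∀ i, φ (r i) = algebraMap k⟦X⟧ k⸨X⸩ (ρ i)) {κ ν : k} (hκ : κ ≠ 0)
    (hν : ν ^ (n - t) = 1) (hκν : κ ^ t = ν ^ t) :
    ∃ π ∈ extendedGaloisGroup L f,
      (∀ w w' : nthRootsFinset t a⁻¹, κ * w = ν * w' → π (r (.inl w)) = r (.inl w')) ∧
      ∀ b b' : nthRootsFinset (n - t) a, (b : k) = ν * b' → π (r (.inr b)) = r (.inr b') := by
  obtain ⟨μ, rfl⟩ := IsAlgClosed.exists_pow_nat_eq κ he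
  have hν0 : ν ≠ 0 := by
    rintro rfl
    exact zero_ne_one ((zero_pow (Nat.sub_ne_zero_of_lt htn)).symm.trans hν)
  obtain ⟨π, hπ, hπρ⟩ := exists_isScalingSymmetry_rescale_eq (φ := φ) ht htn hf hr
    (μ := Units.mk0 μ (ne_zero_pow he.ne' hκ)) (ν := Units.mk0 ν hν0) hν
    (by rw [Units.val_mk0, mul_comm t, pow_mul]; exact hκν)
  refine ⟨π, ⟨_, _, hπ⟩, fun w w' hw => ?_, fun b b' hb => ?_⟩
  · obtain ⟨j, hj, hj'⟩ := hπρ (.inl w)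
    obtain ⟨w₁, rfl, hw₁⟩ := hρ.exists_eq_inl_of_rescale_eq htn ha hν0 hj'
    rw [hj, Subtype.ext (mul_left_cancel₀ hν0 (hw₁.symm.trans hw))]
  · obtain ⟨j, hj, hj'⟩ := hπρ (.inr b)
    obtain ⟨b₁, rfl, hb₁⟩ := hρ.exists_eq_inr_of_rescale_eq htn ha hj'
    rw [hj, Subtype.ext (mul_left_cancel₀ hν0 (hb₁.symm.trans hb))]

theorem isJordanSet_range {α β : Type*} {H : Subgroup (Equiv.Perm α)} {v : β → α}
    (h : ∀ i j, ∃ π ∈ H, (∀ x ∉ Set.range v, π x = x) ∧ π (v i) = v j) :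
    IsJordanSet H (Set.range v) := by
  rintro _ ⟨i, rfl⟩ _ ⟨j, rfl⟩
  obtain ⟨π, hπ, hfix, hij⟩ := h i j
  exact ⟨⟨π, hπ⟩, (mem_fixingSubgroup_iff H).2 hfix, hij⟩

theorem compl_range_comp_inl {α β γ : Type*} (r : α ⊕ β ≃ γ) :
    (Set.range (r ∘ Sum.inl))ᶜ = Set.range (r ∘ Sum.inr) := by
  rw [Set.range_comp, Set.range_comp, ← Set.image_compl_eq r.bijective, Set.compl_range_inl]

theorem isJordanSet_range_comp_inl [IsAlgClosed k]
    (hρ : IsRootExpansion n t e a ρ) (ht : 0 < t) (htn : t < n) (he : 0 < e) (ha : a ≠ 0)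
    (hf : f = abhyankarPoly n t (RatFunc.C a) (RatFunc.X ^ (t * e)))
    (hr : ∀ i, φ (r i) = algebraMap k⟦X⟧ k⸨X⸩ (ρ i)) :
    IsJordanSet (extendedGaloisGroup L f) (Set.range (r ∘ Sum.inl)) := by
  refine isJordanSet_range fun w w' => ?_
  have hw := ne_zero_of_mem_nthRootsFinset ht (inv_ne_zero ha) w.2
  have hw' := ne_zero_of_mem_nthRootsFinset ht (inv_ne_zero ha) w'.2
  obtain ⟨π, hπ, hinl, hinr⟩ := exists_mem_extendedGaloisGroup_apply_eq hρ ht htn he ha hf hr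
    (κ := w' / w) (ν := 1) (div_ne_zero hw' hw) (one_pow _) (by
      rw [div_pow, (mem_nthRootsFinset ht _).1 w.2, (mem_nthRootsFinset ht _).1 w'.2,
        div_self (inv_ne_zero ha), one_pow])
  refine ⟨π, hπ, fun x hx => ?_, hinl w w' (by rw [div_mul_cancel₀ _ hw, one_mul])⟩
  rw [← Set.mem_compl_iff, compl_range_comp_inl] at hx
  obtain ⟨b, rfl⟩ := hx
  exact hinr b b (one_mul _).symm

theorem isJordanSet_range_comp_inr [IsAlgClosed k]
    (hρ : IsRootExpansion n t e a ρ) (ht : 0 < t) (htn : t < n) (he : 0 < e) (ha : a ≠ 0)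
    (hf : f = abhyankarPoly n t (RatFunc.C a) (RatFunc.X ^ (t * e)))
    (hr : ∀ i, φ (r i) = algebraMap k⟦X⟧ k⸨X⸩ (ρ i)) :
    IsJordanSet (extendedGaloisGroup L f) (Set.range (r ∘ Sum.inr)) := by
  refine isJordanSet_range fun b b' => ?_
  have hnt := Nat.sub_pos_of_lt htn
  have hb' := ne_zero_of_mem_nthRootsFinset hnt ha b'.2
  have hν := div_ne_zero (ne_zero_of_mem_nthRootsFinset hnt ha b.2) hb'
  obtain ⟨π, hπ, hinl, hinr⟩ := exists_mem_extendedGaloisGroup_apply_eq hρ ht htn he ha hf hr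
    (κ := b / b') (ν := b / b') hν (by
      rw [div_pow, (mem_nthRootsFinset hnt _).1 b.2, (mem_nthRootsFinset hnt _).1 b'.2,
        div_self ha]) rfl
  refine ⟨π, hπ, fun x hx => ?_, hinr b b' (div_mul_cancel₀ _ hb').symm⟩
  rw [← compl_range_comp_inl, Set.notMem_compl_iff] at hx
  obtain ⟨w, rfl⟩ := hx
  exact hinl w w rfl

theorem exists_isRootExpansion_algHom_equiv_rootSet [IsAlgClosed k] (L : Type*) [Field L]
    [Algebra (RatFunc k) L] [IsSplittingField (RatFunc k) L f] (ht : 0 < t) (htn : t < n)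
    (he : 0 < e) (ha : a ≠ 0) (htk : (t : k) ≠ 0) (hntk : ((n - t : ℕ) : k) ≠ 0)
    (hf : f = abhyankarPoly n t (RatFunc.C a) (RatFunc.X ^ (t * e))) :
    ∃ (ρ : nthRootsFinset t a⁻¹ ⊕ nthRootsFinset (n - t) a → k⟦X⟧) (φ : L →ₐ[RatFunc k] k⸨X⸩)
      (r : nthRootsFinset t a⁻¹ ⊕ nthRootsFinset (n - t) a ≃ f.rootSet L),
      IsRootExpansion n t e a ρ ∧ ∀ i, φ (r i) = algebraMap k⟦X⟧ k⸨X⸩ (ρ i) := by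
  obtain ⟨ρ, hρ⟩ := exists_isRootExpansion ht htn he ha htk hntk
  obtain ⟨φ, r, hr⟩ := exists_algHom_equiv_rootSet_of_nodal_eq (L := L) f
    ((FaithfulSMul.algebraMap_injective k⟦X⟧ k⸨X⸩).comp (hρ.injective htn ha))
    (hf ▸ hρ.nodal_eq ht htn ha htk hntk)
  exact ⟨ρ, φ, r, hρ, hr⟩

end Labelling

section GaloisGroup

variable {k : Type*} [Field k] {L : Type*} [Field L] [Algebra (RatFunc k) L] {f : (RatFunc k)[X]}
  {n t e s : ℕ} {a : k}

/-- The alternating group on at least five letters is perfect, so passing from the Galois group to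
the extended group loses nothing. -/
theorem alternatingGroup_le_range_galActionHom [Fact (f.map (algebraMap (RatFunc k) L)).Splits]
    (hcard : 5 ≤ Nat.card (f.rootSet L))
    (h : alternatingGroup (f.rootSet L) ≤ extendedGaloisGroup L f) :
    alternatingGroup (f.rootSet L) ≤ (Gal.galActionHom f L).range :=
  calc alternatingGroup (f.rootSet L)
      = ⁅alternatingGroup (f.rootSet L), alternatingGroup (f.rootSet L)⁆ :=
        (commutator_alternatingGroup_eq_self hcard).symm
    _ ≤ ⁅extendedGaloisGroup L f, extendedGaloisGroup L f⁆ := Subgroup.commutator_mono h h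
    _ ≤ (Gal.galActionHom f L).range := commutator_extendedGaloisGroup_le

theorem exists_prod_eval_derivative_eq_sq [IsAlgClosed k] {Ω : Type*} [Fintype Ω] {v : Ω → L}
    (ht : 0 < t) (htn : t < n) (hn : (n : k) = 0) (hs : Even (s * (t - 1)))
    (hf : f = abhyankarPoly n t (RatFunc.C a) (RatFunc.X ^ s))
    (hv : Lagrange.nodal Finset.univ v = f.map (algebraMap (RatFunc k) L)) :
    ∃ q : RatFunc k, ∏ i, eval (v i) (derivative (Lagrange.nodal Finset.univ v)) =
      algebraMap (RatFunc k) L q ^ 2 := by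
  obtain ⟨m, hm⟩ := hs
  obtain ⟨c, hc⟩ := IsAlgClosed.exists_pow_nat_eq ((-a * t) ^ n * ((-1) ^ n) ^ (t - 1)) two_pos
  have hnL : (n : L) = 0 := by
    rw [← map_natCast ((algebraMap (RatFunc k) L).comp RatFunc.C), hn, map_zero]
  rw [hf, abhyankarPoly.map_eq] at hv
  have hsq : (RatFunc.C c * RatFunc.X ^ m) ^ 2 =
      (-RatFunc.C a * (t : RatFunc k)) ^ n * ((-1) ^ n * RatFunc.X ^ s) ^ (t - 1) := by
    rw [mul_pow, ← map_pow RatFunc.C, hc, ← pow_mul RatFunc.X, mul_two, ← hm,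
      mul_pow _ (RatFunc.X ^ s), ← pow_mul RatFunc.X, ← mul_assoc]
    simp only [map_mul, map_pow, map_neg, map_one, map_natCast]
  refine ⟨RatFunc.C c * RatFunc.X ^ m, ?_⟩
  rw [abhyankarPoly.prod_eval_derivative ht htn hnL hv, ← map_pow, hsq]
  simp only [map_mul, map_pow, map_neg, map_one, map_natCast]

variable [IsSplittingField (RatFunc k) L f]

theorem isPretransitive_extendedGaloisGroup [Fact (f.map (algebraMap (RatFunc k) L)).Splits]
    (hf : Irreducible f) :
    MulAction.IsPretransitive (extendedGaloisGroup L f) (f.rootSet L) where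
  exists_smul_eq y y' := by
    have := Gal.galAction_isPretransitive f L hf
    obtain ⟨g, hg⟩ := MulAction.exists_smul_eq f.Gal y y'
    exact ⟨⟨_, range_galActionHom_le_extendedGaloisGroup ⟨g, rfl⟩⟩, hg⟩

variable [IsAlgClosed k]

theorem card_rootSet_eq (ht : 0 < t) (htn : t < n) (he : 0 < e) (ha : a ≠ 0) (htk : (t : k) ≠ 0)
    (hntk : ((n - t : ℕ) : k) ≠ 0)
    (hf : f = abhyankarPoly n t (RatFunc.C a) (RatFunc.X ^ (t * e))) :
    Fintype.card (f.rootSet L) = n := by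
  obtain ⟨-, -, r, -⟩ :=
    exists_isRootExpansion_algHom_equiv_rootSet L ht htn he ha htk hntk hf
  rw [← Fintype.card_congr r, card_nthRootsFinset_sum htn.le ha htk hntk]

theorem alternatingGroup_le_extendedGaloisGroup
    [Fact (f.map (algebraMap (RatFunc k) L)).Splits] (ht : 1 < t) (htn : t + 1 < n)
    (hco : n.Coprime t) (he : 0 < e) (ha : a ≠ 0) (htk : (t : k) ≠ 0)
    (hntk : ((n - t : ℕ) : k) ≠ 0)
    (hf : f = abhyankarPoly n t (RatFunc.C a) (RatFunc.X ^ (t * e))) :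
    alternatingGroup (f.rootSet L) ≤ extendedGaloisGroup L f := by
  have ht0 : 0 < t := by lia
  have htn' : t < n := by lia
  obtain ⟨ρ, φ, r, hρ, hr⟩ :=
    exists_isRootExpansion_algHom_equiv_rootSet L ht0 htn' he ha htk hntk hf
  obtain ⟨b, hb⟩ := IsAlgClosed.exists_pow_nat_eq a (Nat.sub_pos_of_lt htn')
  have hb0 : b ≠ 0 := ne_zero_pow (Nat.sub_ne_zero_of_lt htn') (hb ▸ ha)
  have hirr : Irreducible f :=
    hf ▸ abhyankarPoly.irreducible ht0 htn' (Nat.mul_pos ht0 he).ne' hb0 hb hntk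
  have := isPretransitive_extendedGaloisGroup (L := L) hirr
  have hinl : (Set.range (r ∘ Sum.inl)).ncard = t := by
    rw [Set.ncard_range_of_injective (r.injective.comp Sum.inl_injective),
      Nat.card_eq_fintype_card, Fintype.card_coe, card_nthRootsFinset htk (inv_ne_zero ha)]
  have hinr : (Set.range (r ∘ Sum.inl))ᶜ.ncard = n - t := by
    rw [compl_range_comp_inl, Set.ncard_range_of_injective (r.injective.comp Sum.inr_injective),
      Nat.card_eq_fintype_card, Fintype.card_coe, card_nthRootsFinset hntk ha]
  refine alternatingGroup_le_of_isJordanSet (A := Set.range (r ∘ Sum.inl))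
    (isJordanSet_range_comp_inl hρ ht0 htn' he ha hf hr) ?_ ?_ ?_ ?_
  · rw [compl_range_comp_inl]
    exact isJordanSet_range_comp_inr hρ ht0 htn' he ha hf hr
  · rwa [hinl]
  · rw [hinr]; lia
  · rw [hinl, hinr]
    exact ((Nat.coprime_sub_self_left htn'.le).2 hco).symm

theorem range_galActionHom_le_alternatingGroup [Fact (f.map (algebraMap (RatFunc k) L)).Splits]
    (ht : 0 < t) (htn : t < n) (h2 : (2 : k) ≠ 0) (hn : (n : k) = 0) (hs : Even (s * (t - 1)))
    (hf : f = abhyankarPoly n t (RatFunc.C a) (RatFunc.X ^ s))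
    (hcard : Fintype.card (f.rootSet L) = n) :
    (Gal.galActionHom f L).range ≤ alternatingGroup (f.rootSet L) := by
  intro π hπ
  obtain ⟨σ, hσ⟩ := exists_algEquiv_of_mem_range_galActionHom hπ
  obtain ⟨ι, hι⟩ := IsAlgClosed.exists_pow_nat_eq (-1 : k) two_pos
  have hnodal : Lagrange.nodal Finset.univ ((↑) : f.rootSet L → L) =
      f.map (algebraMap (RatFunc k) L) :=
    nodal_rootSet_eq (hf ▸ abhyankarPoly.monic ht htn)
      (by rw [hcard, hf, abhyankarPoly.natDegree_eq ht htn])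
  obtain ⟨q, hq⟩ := exists_prod_eval_derivative_eq_sq ht htn hn hs hf hnodal
  let C' := (algebraMap (RatFunc k) L).comp RatFunc.C
  have h2L : (2 : L) ≠ 0 := by
    rw [← map_ofNat C' 2]
    exact (map_ne_zero C').2 h2
  rw [Equiv.Perm.mem_alternatingGroup]
  exact sign_eq_one_of_prod_eval_derivative_eq_sq h2L Subtype.val_injective (σ := (σ : L →+* L))
    (ι := C' ι) hσ (by rw [← map_pow, hι, map_neg, map_one]) (σ.commutes _) (σ.commutes _) hq

end GaloisGroup

theorem cast_ne_zero_of_coprime {R : Type*} [CommRing R] [Nontrivial R] {n t : ℕ}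
    (h : n.Coprime t) (hn : (n : R) = 0) : (t : R) ≠ 0 := by
  intro ht
  have hunit := (Nat.isCoprime_iff_coprime.2 h).map (Int.castRingHom R)
  exact not_isCoprime_zero_zero (by simpa [hn, ht] using hunit)

end AbhyankarTrinomial

open AbhyankarTrinomial in
theorem stmt_6_general (p : ℕ) (hodd : Odd p) (k : Type*) [Field k] [IsAlgClosed k] [CharP k p]
    (n s t : ℕ) (hs : 0 < s) (ht : 1 < t) (hco : Nat.gcd n t = 1) (hpn : p ∣ n) (hts : t ∣ s)
    (htn : t + 1 < n) (a : k) (ha : a ≠ 0) (f : (RatFunc k)[X])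
    (hf : f = X ^ n - C (algebraMap k (RatFunc k) a) * X ^ t + C (RatFunc.X ^ s))
    (L : Type*) [Field L] [Algebra (RatFunc k) L] [IsSplittingField (RatFunc k) L f]
    [Fact ((f.map (algebraMap (RatFunc k) L)).Splits)] :
    Fintype.card (f.rootSet L) = n ∧
      (Gal.galActionHom f L).range = alternatingGroup (f.rootSet L) := by
  have hf : f = abhyankarPoly n t (RatFunc.C a) (RatFunc.X ^ s) := by
    rwa [RatFunc.algebraMap_eq_C] at hf
  have hnk : (n : k) = 0 := (CharP.cast_eq_zero_iff k p n).2 hpn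
  have htk : (t : k) ≠ 0 := cast_ne_zero_of_coprime hco hnk
  have hntk : ((n - t : ℕ) : k) ≠ 0 := by
    rwa [Nat.cast_sub (by lia), hnk, zero_sub, neg_ne_zero]
  have h2 : (2 : k) ≠ 0 := by
    have := cast_ne_zero_of_coprime (R := k) hodd.coprime_two_right (CharP.cast_eq_zero k p)
    rwa [Nat.cast_ofNat] at this
  have heven : Even (s * (t - 1)) :=
    (Nat.even_mul_pred_self t).trans_dvd (Nat.mul_dvd_mul_right hts _)
  obtain ⟨e, rfl⟩ := hts
  have he : 0 < e := Nat.pos_of_mul_pos_left hs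
  have hcard : Fintype.card (f.rootSet L) = n :=
    card_rootSet_eq (by lia) (by lia) he ha htk hntk hf
  have hn5 : 5 ≤ n := by
    by_contra! h
    obtain ⟨rfl, rfl⟩ : n = 4 ∧ t = 2 := by lia
    norm_num at hco
  refine ⟨hcard, (range_galActionHom_le_alternatingGroup (by lia) (by lia) h2 hnk heven hf
    hcard).antisymm (alternatingGroup_le_range_galActionHom ?_ ?_)⟩
  · rwa [Nat.card_eq_fintype_card, hcard]
  · exact alternatingGroup_le_extendedGaloisGroup ht htn hco he ha htk hntk hf

/-- Abhyankar: over an algebraically closed field `k` of odd characteristic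
`p`, for positive integers `n, s, t` with `gcd(n,t) = 1`, `p ∣ n`, `t ∣ s`
and `1 < t < n - 3`, the polynomial `Y^n - a·Y^t + X^s` over `k(X)` has `n`
distinct roots in its splitting field, and the image of its Galois group in
the permutation group of the set of roots is exactly the alternating group
on those roots. -/
theorem stmt_6 (p : ℕ) (hp : p.Prime) (hodd : Odd p)
    (k : Type*) [Field k] [IsAlgClosed k] [CharP k p]
    (n s t : ℕ) (hn : 0 < n) (hs : 0 < s) (ht1 : 1 < t)
    (hco : Nat.gcd n t = 1) (hpn : p ∣ n) (hts : t ∣ s) (htn : t + 3 < n)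
    (a : k) (ha : a ≠ 0)
    (f : Polynomial (RatFunc k))
    (hf : f = X ^ n - C (algebraMap k (RatFunc k) a) * X ^ t + C (RatFunc.X ^ s)) :
    haveI : Fact ((f.map (algebraMap (RatFunc k) f.SplittingField)).Splits) :=
      ⟨SplittingField.splits f⟩
    Fintype.card (f.rootSet f.SplittingField) = n ∧
      (Polynomial.Gal.galActionHom f f.SplittingField).range =
        alternatingGroup (f.rootSet f.SplittingField) := by
  have : Fact ((f.map (algebraMap (RatFunc k) f.SplittingField)).Splits) :=
    ⟨SplittingField.splits f⟩
  exact stmt_6_general p hodd k n s t hs ht1 hco hpn hts (by lia) a ha f hf f.SplittingField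
end

section
/- Let k be an algebraically closed field of odd characteristic p with p ≠ 11 and p ≠ 23, let a be a nonzero element of k, and let n, s, t be positive integers with gcd(n,t) = 1, p dividing n, t dividing s, and 1 < t = n - 3. Then the polynomial f = Y^n - a·Y^t + X^s over the rational function field k(X) has n distinct roots in a splitting field, and the image of its Galois group in the group of permutations of this set of roots is exactly the alternating group on those n roots. -/
open Polynomial

open scoped Classical

/-!
Let `G` be the Galois group, acting on the `t + 3` roots. By Hensel's lemma all roots lie in
`k((X))`: three of them have valuation `0`, with constant coefficients the cube roots of `a`, and
the other `t` have valuation `s / t`. The automorphism `X ↦ ηX` of `k((X))` followed by the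
scaling `Y ↦ μY` permutes the roots when `μ` and `η` are suitable roots of unity, and it preserves
`k(X)`, so these permutations normalize `G`. Among them are a 3-cycle of the large roots fixing
every small root, and permutations that fix the large roots and are transitive on the small ones.
As `G` is transitive and `3 ∤ t`, the normalizer of `G` is primitive; containing a 3-cycle, it
contains the alternating group. The derivative of `f` is a monomial because `p ∣ n`, which makes
the discriminant a square, so `G` is contained in the alternating group. Thus `G` is a nontrivial
normal subgroup of a simple group.
-/

section PermutationGroups

open Equiv.Perm MulAction Pointwise

variable {α : Type*} [Fintype α] [DecidableEq α]

theorem support_subset_of_isBlock_of_isCycle {N : Subgroup (Equiv.Perm α)} {τ : Equiv.Perm α}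
    (hτN : τ ∈ N) (hτ : τ.IsCycle) (hprime : τ.support.card.Prime) {B : Set α}
    (hB : IsBlock N B) (hnt : B.Nontrivial) {x : α} (hx : x ∈ τ.support) (hxB : x ∈ B) :
    (τ.support : Set α) ⊆ B := by
  obtain ⟨y, hyB, hyx⟩ := hnt.exists_ne x
  have smul_eq (i : ℕ) {u v : α} (hu : u ∈ B) (hv : v ∈ B) (huv : (τ ^ i) u = v) :
      (⟨τ, hτN⟩ : N) ^ i • B = B :=
    hB.smul_eq_of_mem hu (by simpa [Subgroup.smul_def, huv] using hv)
  have hfix : (⟨τ, hτN⟩ : N) • B = B := by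
    by_cases hy : y ∈ τ.support
    · obtain ⟨i, hi, hxy⟩ := (hτ.sameCycle (mem_support.1 hx) (mem_support.1 hy)).exists_pow_eq'
      have hi0 : i ≠ 0 := by rintro rfl; exact hyx hxy.symm
      have hcop : i.Coprime (orderOf (⟨τ, hτN⟩ : N)) := by
        rw [Subgroup.orderOf_mk, hτ.orderOf]
        rw [hτ.orderOf] at hi
        exact (Nat.coprime_of_lt_prime hi0 hi hprime).symm
      obtain ⟨m, hm⟩ := exists_pow_eq_self_of_coprime hcop
      rw [← hm]
      exact mem_stabilizer_iff.1 (pow_mem (mem_stabilizer_iff.2 (smul_eq i hxB hyB hxy)) m)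
    · simpa using smul_eq 1 hyB hyB (by simpa using hy)
  intro z hz
  obtain ⟨i, -, rfl⟩ :=
    (hτ.sameCycle (mem_support.1 hx) (mem_support.1 hz)).exists_pow_eq'
  have := pow_mem (mem_stabilizer_iff.2 hfix) i
  rw [← mem_stabilizer_iff.1 this]
  exact ⟨x, hxB, rfl⟩

theorem isPreprimitive_of_isCycle_mem {N : Subgroup (Equiv.Perm α)} [IsPretransitive N α]
    {τ : Equiv.Perm α} (hτN : τ ∈ N) (hτ : τ.IsCycle) (hprime : τ.support.card.Prime)
    (hdvd : ¬ τ.support.card ∣ Nat.card α)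
    (hfix : ∀ y ∉ τ.support, ∀ z ∉ τ.support, ∃ g ∈ N, g y = z ∧ ∀ x ∈ τ.support, g x = x) :
    IsPreprimitive N α := by
  obtain ⟨x, hx⟩ := hτ.nonempty_support
  refine .of_isTrivialBlock_base x fun {B} hxB hB ↦ ?_
  refine or_iff_not_imp_left.2 fun hsub ↦ ?_
  have hsupp : (τ.support : Set α) ⊆ B := support_subset_of_isBlock_of_isCycle hτN hτ hprime hB
    (Set.not_subsingleton_iff.1 hsub) hx hxB
  by_cases hout : B ⊆ τ.support
  · exact absurd (hB.ncard_dvd_card ⟨x, hxB⟩) (by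
      rwa [hout.antisymm hsupp, Set.ncard_coe_finset])
  obtain ⟨y, hyB, hy⟩ := Set.not_subset.1 hout
  refine Set.eq_univ_of_forall fun z ↦ ?_
  by_cases hz : z ∈ τ.support
  · exact hsupp hz
  obtain ⟨g, hgN, rfl, hgfix⟩ := hfix y hy z hz
  have hgB : (⟨g, hgN⟩ : N) • B = B :=
    hB.smul_eq_of_mem hxB (by simpa [Subgroup.smul_def, hgfix x hx] using hxB)
  rw [← hgB]
  exact ⟨y, hyB, rfl⟩

theorem eq_alternatingGroup_of_isPretransitive_of_isThreeCycle_mem_normalizer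
    {G : Subgroup (Equiv.Perm α)} [IsPretransitive G α] (hG : G ≤ alternatingGroup α)
    (h5 : 5 ≤ Fintype.card α) (h3 : ¬ 3 ∣ Fintype.card α)
    {τ : Equiv.Perm α} (hτ : τ.IsThreeCycle)
    (hτN : τ ∈ Subgroup.normalizer (G : Set (Equiv.Perm α)))
    (hfix : ∀ y ∉ τ.support, ∀ z ∉ τ.support,
      ∃ g ∈ Subgroup.normalizer (G : Set (Equiv.Perm α)), g y = z ∧ ∀ x ∈ τ.support, g x = x) :
    G = alternatingGroup α := by
  have : IsPretransitive (Subgroup.normalizer (G : Set (Equiv.Perm α))) α := .mk fun x y ↦ by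
    obtain ⟨g, hg⟩ := exists_smul_eq G x y
    exact ⟨⟨g, Subgroup.le_normalizer g.2⟩, hg⟩
  have : IsPreprimitive (Subgroup.normalizer (G : Set (Equiv.Perm α))) α :=
    isPreprimitive_of_isCycle_mem hτN hτ.isCycle (by rw [hτ.card_support]; exact Nat.prime_three)
      (by rwa [hτ.card_support, Nat.card_eq_fintype_card]) hfix
  have hAN : alternatingGroup α ≤ Subgroup.normalizer (G : Set (Equiv.Perm α)) :=
    alternatingGroup_le_of_isPreprimitive_of_isThreeCycle_mem ‹_› hτ hτN
  have : IsSimpleGroup (alternatingGroup α) := alternatingGroup.isSimpleGroup (by simpa using h5)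
  have : (G.subgroupOf (alternatingGroup α)).Normal :=
    (Subgroup.normal_subgroupOf_iff_le_normalizer hG).2 hAN
  rcases this.eq_bot_or_eq_top with hbot | htop
  · have : Subsingleton G := by
      rw [(Subgroup.subgroupOf_eq_bot.1 hbot).eq_bot_of_le hG]
      infer_instance
    obtain ⟨x, y, hxy⟩ := Fintype.exists_pair_of_one_lt_card (by lia : 1 < Fintype.card α)
    obtain ⟨g, hg⟩ := exists_smul_eq G x y
    rw [Subsingleton.elim g 1, one_smul] at hg
    exact absurd hg hxy
  · exact le_antisymm hG (Subgroup.subgroupOf_eq_top.1 htop)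

theorem eq_alternatingGroup_of_permCongr_sumCongr_mem_normalizer
    {G : Subgroup (Equiv.Perm α)} [IsPretransitive G α] (hG : G ≤ alternatingGroup α)
    (h5 : 5 ≤ Fintype.card α) (h3 : ¬ 3 ∣ Fintype.card α)
    {A B : Type*} [Fintype A] (e : A ⊕ B ≃ α) (hA : Fintype.card A = 3)
    {σ : Equiv.Perm A} (hσ : ∀ x, σ x ≠ x)
    (hσN : e.permCongr (σ.sumCongr 1) ∈ Subgroup.normalizer (G : Set (Equiv.Perm α)))
    (hB : ∀ y z : B, ∃ ρ : Equiv.Perm B, ρ y = z ∧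
      e.permCongr (Equiv.sumCongr 1 ρ) ∈ Subgroup.normalizer (G : Set (Equiv.Perm α))) :
    G = alternatingGroup α := by
  have mem_support (x : A) : e (.inl x) ∈ (e.permCongr (σ.sumCongr 1)).support := by simp [hσ]
  have notMem_support (y : B) : e (.inr y) ∉ (e.permCongr (σ.sumCongr 1)).support := by simp
  have hthree : (e.permCongr (σ.sumCongr 1)).IsThreeCycle := by
    have hsupp : (e.permCongr (σ.sumCongr 1)).support =
        Finset.univ.map (Function.Embedding.inl.trans e.toEmbedding) := by
      ext z
      obtain ⟨x | y, rfl⟩ := e.surjective z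
      · simpa using mem_support x
      · simp
    rw [← card_support_eq_three_iff, hsupp, Finset.card_map, Finset.card_univ, hA]
  refine eq_alternatingGroup_of_isPretransitive_of_isThreeCycle_mem_normalizer hG h5 h3 hthree hσN
    fun y hy z hz ↦ ?_
  obtain ⟨x | y, rfl⟩ := e.surjective y
  · exact absurd (mem_support x) hy
  obtain ⟨x | z, rfl⟩ := e.surjective z
  · exact absurd (mem_support x) hz
  obtain ⟨ρ, hρ, hρN⟩ := hB y z
  refine ⟨_, hρN, by simp [hρ], fun w hw ↦ ?_⟩
  obtain ⟨x | y, rfl⟩ := e.surjective w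
  · simp
  · exact absurd hw (notMem_support y)

end PermutationGroups

section GaloisActionOnRoots

open Polynomial.Gal

variable {F E : Type*} [Field F] [Field E] [Algebra F E] {p : F[X]}
  [Fact ((p.map (algebraMap F E)).Splits)]

theorem aeval_rootsEquivRoots_symm_surjective : Function.Surjective (MvPolynomial.aeval (R := F)
    fun y : p.rootSet E ↦ ((rootsEquivRoots p E).symm y : p.SplittingField)) := by
  have hrange := (rootsEquivRoots p E).symm.surjective.range_comp
    (Subtype.val : _ → p.SplittingField)
  rw [← AlgHom.range_eq_top, ← Algebra.adjoin_range_eq_range_aeval,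
    ← SplittingField.adjoin_rootSet]
  exact congrArg _ (hrange.trans Subtype.range_coe)

theorem algebraMap_rootsEquivRoots_symm (y : p.rootSet E) :
    algebraMap p.SplittingField E ((rootsEquivRoots p E).symm y) = y :=
  congrArg Subtype.val ((rootsEquivRoots p E).apply_symm_apply y)

theorem algebraMap_aeval_rootsEquivRoots_symm {ι : Type*} (v : ι → p.rootSet E)
    (P : MvPolynomial ι F) :
    algebraMap p.SplittingField E
      (MvPolynomial.aeval (fun i ↦ ((rootsEquivRoots p E).symm (v i) : p.SplittingField)) P) =
      MvPolynomial.aeval (fun i ↦ (v i : E)) P := by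
  simp only [← MvPolynomial.aeval_algebraMap_apply, Function.comp_def,
    algebraMap_rootsEquivRoots_symm]

theorem mem_range_galActionHom_iff_exists_algEquiv {g : Equiv.Perm (p.rootSet E)} :
    g ∈ (galActionHom p E).range ↔ ∃ σ : p.SplittingField ≃ₐ[F] p.SplittingField,
      ∀ y, σ ((rootsEquivRoots p E).symm y) = (rootsEquivRoots p E).symm (g y) := by
  refine exists_congr fun σ : p.Gal ↦ Equiv.ext_iff.trans (forall_congr' fun y ↦ ?_)
  exact ((rootsEquivRoots p E).eq_symm_apply.symm.trans Subtype.ext_iff)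

theorem mem_range_galActionHom_iff_forall_relation {g : Equiv.Perm (p.rootSet E)} :
    g ∈ (galActionHom p E).range ↔ ∀ P : MvPolynomial (p.rootSet E) F,
      MvPolynomial.aeval (fun y : p.rootSet E ↦ (y : E)) P = 0 →
        MvPolynomial.aeval (fun y ↦ (g y : E)) P = 0 := by
  simp only [← algebraMap_aeval_rootsEquivRoots_symm (fun y ↦ y),
    ← algebraMap_aeval_rootsEquivRoots_symm (fun y ↦ g y), map_eq_zero,
    mem_range_galActionHom_iff_exists_algEquiv]
  constructor
  · rintro ⟨σ, hσ⟩ P hP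
    simp only [← hσ]
    simpa [MvPolynomial.comp_aeval_apply] using congrArg σ.toAlgHom hP
  · intro h
    let σ : p.SplittingField →ₐ[F] p.SplittingField :=
      .liftOfSurjective _ (aeval_rootsEquivRoots_symm_surjective (E := E))
        (MvPolynomial.aeval fun y ↦ ((rootsEquivRoots p E).symm (g y) : p.SplittingField)) h
    refine ⟨.ofBijective σ (Algebra.IsAlgebraic.algHom_bijective σ), fun y ↦ ?_⟩
    simpa using AlgHom.liftOfSurjective_apply _
      (aeval_rootsEquivRoots_symm_surjective (E := E)) _ h (MvPolynomial.X y)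

theorem mem_normalizer_range_galActionHom {Φ : E →+* E} {φ : F →+* F}
    (hΦ : ∀ x, Φ (algebraMap F E x) = algebraMap F E (φ x)) {c : F} (hc : c ≠ 0)
    {π : Equiv.Perm (p.rootSet E)} (hπ : ∀ y, (π y : E) = algebraMap F E c * Φ y) :
    π ∈ Subgroup.normalizer ((galActionHom p E).range : Set (Equiv.Perm (p.rootSet E))) := by
  -- `T` carries a relation `P` among the roots to the relation `Φ (P (y))`, expressed in `π y`.
  let T : MvPolynomial (p.rootSet E) F →+* MvPolynomial (p.rootSet E) F :=
    MvPolynomial.eval₂Hom (MvPolynomial.C.comp φ)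
      fun y ↦ MvPolynomial.C c⁻¹ * MvPolynomial.X (π y)
  have aeval_T (g : Equiv.Perm (p.rootSet E)) (P : MvPolynomial (p.rootSet E) F) :
      MvPolynomial.aeval (fun y ↦ (g y : E)) (T P) =
        Φ (MvPolynomial.aeval (fun y ↦ ((π⁻¹ * g * π) y : E)) P) := by
    have hcE : algebraMap F E c ≠ 0 := by simpa using hc
    induction P using MvPolynomial.induction_on with
    | C x => simp [T, hΦ]
    | add P Q hP hQ => simp only [map_add, hP, hQ]
    | mul_X P y hP =>
      have hy : (g (π y) : E) = algebraMap F E c * Φ ((π⁻¹ * g * π) y : p.rootSet E) := by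
        simp [← hπ]
      simp only [map_mul, hP, T, MvPolynomial.eval₂Hom_X', MvPolynomial.aeval_X,
        MvPolynomial.aeval_C, hy, map_inv₀]
      field_simp
  have conj_mem {g : Equiv.Perm (p.rootSet E)} (hg : g ∈ (galActionHom p E).range) :
      π⁻¹ * g * π ∈ (galActionHom p E).range := by
    rw [mem_range_galActionHom_iff_forall_relation] at hg ⊢
    intro P hP
    have h1 := aeval_T 1 P
    have h2 := hg (T P) (by simpa [hP] using h1)
    rwa [aeval_T, map_eq_zero] at h2
  rw [← Subgroup.inv_mem_iff]
  exact Subgroup.mem_normalizer_fintype fun g hg ↦ by simpa using conj_mem hg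

end GaloisActionOnRoots

section SplitRoots

variable {F E : Type*} [Field F] [Field E] [Algebra F E] {p : F[X]} {J : Type*} [Fintype J]

theorem map_algebraMap_eq_nodal_of_injective (hp : p.Monic) (hcard : p.natDegree = Fintype.card J)
    {r : J → E} (hr : Function.Injective r) (hroot : ∀ i, aeval (r i) p = 0) :
    p.map (algebraMap F E) = Lagrange.nodal Finset.univ r := by
  have hdeg : (p.map (algebraMap F E)).degree = (Finset.univ : Finset J).card := by
    rw [hp.degree_map, degree_eq_natDegree hp.ne_zero, hcard, Finset.card_univ]
  refine eq_of_degree_le_of_eval_index_eq Finset.univ hr.injOn hdeg.le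
    (hdeg.trans Lagrange.degree_nodal.symm) ?_ fun i hi ↦ ?_
  · rw [(hp.map _).leadingCoeff, Lagrange.nodal_monic.leadingCoeff]
  · rw [Lagrange.eval_nodal_at_node hi, eval_map_algebraMap, hroot]

theorem splits_map_algebraMap_of_injective (hp : p.Monic) (hcard : p.natDegree = Fintype.card J)
    {r : J → E} (hr : Function.Injective r) (hroot : ∀ i, aeval (r i) p = 0) :
    (p.map (algebraMap F E)).Splits := by
  rw [map_algebraMap_eq_nodal_of_injective hp hcard hr hroot]
  exact Splits.prod fun i _ ↦ Splits.X_sub_C _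

theorem exists_equiv_rootSet_of_injective (hp : p.Monic) (hcard : p.natDegree = Fintype.card J)
    {r : J → E} (hr : Function.Injective r) (hroot : ∀ i, aeval (r i) p = 0) :
    ∃ e : J ≃ p.rootSet E, ∀ i, (e i : E) = r i := by
  let e (i : J) : p.rootSet E := ⟨r i, (mem_rootSet_of_ne hp.ne_zero).2 (hroot i)⟩
  have he : Function.Injective e := fun i j h ↦ hr (congrArg Subtype.val h)
  refine ⟨.ofBijective e (he.bijective_of_nat_card_le ?_), fun _ ↦ rfl⟩
  rw [Nat.card_coe_set_eq, Nat.card_eq_fintype_card, ← hcard]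
  exact ncard_rootSet_le _ _

end SplitRoots

section Discriminant

open Finset Matrix Polynomial.Gal

theorem det_vandermonde_sq {R : Type*} [CommRing R] {n : ℕ} (v : Fin n → R) :
    (vandermonde v).det ^ 2 =
      (-1) ^ (n * (n - 1) / 2) * ∏ i, ∏ j ∈ ({i}ᶜ : Finset (Fin n)), (v i - v j) := by
  have hsign : ∏ i : Fin n, ∏ j ∈ Ioi i, (-1 : R) = (-1) ^ (n * (n - 1) / 2) := by
    simp only [prod_const, Fin.card_Ioi, prod_pow_eq_pow_sum]
    rw [Fin.sum_univ_eq_sum_range (fun i ↦ n - 1 - i) n, sum_range_reflect (fun i ↦ i),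
      sum_range_id]
  rw [← prod_prod_Ioi_mul_eq_prod_prod_off_diag (fun j i ↦ v i - v j), det_vandermonde, ← hsign,
    ← prod_pow, ← prod_mul_distrib]
  refine prod_congr rfl fun i _ ↦ ?_
  rw [← prod_pow, ← prod_mul_distrib]
  exact prod_congr rfl fun j _ ↦ by ring

variable {F E : Type*} [Field F] [Field E] [Algebra F E] {p : F[X]}

theorem aeval_derivative_eq_prod_of_card_rootSet (hp : p.Monic) {n : ℕ} (hn : p.natDegree = n)
    (v : Fin n ≃ p.rootSet E) (i : Fin n) :
    aeval (v i : E) (derivative p) = ∏ j ∈ ({i}ᶜ : Finset (Fin n)), ((v i : E) - v j) := by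
  rw [← eval_map_algebraMap, ← derivative_map, map_algebraMap_eq_nodal_of_injective hp
      (r := fun i ↦ (v i : E)) (by simpa using hn) (Subtype.val_injective.comp v.injective)
      fun j ↦ (mem_rootSet.1 (v j).2).2,
    Lagrange.eval_nodal_derivative_eval_node_eq (v := fun i ↦ (v i : E)) (mem_univ i),
    Lagrange.eval_nodal]
  exact prod_congr (by ext; simp) fun _ _ ↦ rfl

variable [Fact ((p.map (algebraMap F E)).Splits)]

theorem sign_eq_one_of_det_vandermonde_eq_algebraMap (h2 : (2 : F) ≠ 0) {n : ℕ}
    (v : Fin n ≃ p.rootSet E) {d : F}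
    (hd : (vandermonde fun i ↦ (v i : E)).det = algebraMap F E d)
    {g : Equiv.Perm (p.rootSet E)} (hg : g ∈ (galActionHom p E).range) :
    Equiv.Perm.sign g = 1 := by
  let P : MvPolynomial (p.rootSet E) F :=
    (vandermonde fun i ↦ MvPolynomial.X (v i)).det - MvPolynomial.C d
  have aeval_P (w : p.rootSet E → E) :
      MvPolynomial.aeval w P = (vandermonde fun i ↦ w (v i)).det - algebraMap F E d := by
    rw [map_sub, AlgHom.map_det, MvPolynomial.aeval_C]
    congr 2
    ext i j
    simp [vandermonde_apply]
  have hgP := mem_range_galActionHom_iff_forall_relation.1 hg P (by rw [aeval_P, hd, sub_self])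
  have hperm : (vandermonde fun i ↦ (g (v i) : E)).det =
      Equiv.Perm.sign g * (vandermonde fun i ↦ (v i : E)).det := by
    rw [← Equiv.Perm.sign_permCongr v.symm, ← det_permute]
    congr 1
    ext i j
    simp [vandermonde_apply]
  have hD : (vandermonde fun i ↦ (v i : E)).det ≠ 0 :=
    det_vandermonde_ne_zero_iff.2 (Subtype.val_injective.comp v.injective)
  rw [aeval_P, hperm, ← hd, sub_eq_zero, mul_eq_right₀ hD] at hgP
  refine (Int.units_eq_one_or _).resolve_right fun hneg ↦ ?_
  have h2E : (2 : E) ≠ 0 := by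
    simpa only [map_ofNat, map_zero] using (algebraMap F E).injective.ne h2
  rw [hneg] at hgP
  apply h2E
  push_cast at hgP
  linear_combination -hgP

theorem range_galActionHom_le_alternatingGroup (h2 : (2 : F) ≠ 0) (hneg : IsSquare (-1 : F))
    (hp : p.Monic) (hcard : Fintype.card (p.rootSet E) = p.natDegree) {d : F}
    (hd : ∏ y : p.rootSet E, aeval (y : E) (derivative p) = algebraMap F E d) (hd2 : IsSquare d) :
    (galActionHom p E).range ≤ alternatingGroup (p.rootSet E) := by
  obtain ⟨c, hc⟩ := hneg
  obtain ⟨r, rfl⟩ := hd2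
  let v : Fin p.natDegree ≃ p.rootSet E := (Fintype.equivFinOfCardEq hcard).symm
  have hsq : (vandermonde fun i ↦ (v i : E)).det ^ 2 =
      algebraMap F E (c ^ (p.natDegree * (p.natDegree - 1) / 2) * r) ^ 2 := by
    rw [det_vandermonde_sq, ← prod_congr rfl fun i _ ↦
      aeval_derivative_eq_prod_of_card_rootSet hp rfl v i,
      v.prod_comp fun y ↦ aeval (y : E) (derivative p), hd, ← map_pow, mul_pow, ← pow_mul,
      mul_comm _ 2, pow_mul, sq c, ← hc, sq r]
    simp
  obtain h | h := sq_eq_sq_iff_eq_or_eq_neg.1 hsq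
  · exact fun g hg ↦ sign_eq_one_of_det_vandermonde_eq_algebraMap h2 v h hg
  · rw [← map_neg] at h
    exact fun g hg ↦ sign_eq_one_of_det_vandermonde_eq_algebraMap h2 v h hg

end Discriminant

section Transfer

open Polynomial.Gal

variable {F E E' : Type*} [Field F] [Field E] [Algebra F E] [Field E'] [Algebra F E'] {p : F[X]}
  [Fact ((p.map (algebraMap F E)).Splits)] [Fact ((p.map (algebraMap F E')).Splits)]

theorem range_galActionHom_eq_alternatingGroup_congr
    (h : (galActionHom p E).range = alternatingGroup (p.rootSet E)) :
    (galActionHom p E').range = alternatingGroup (p.rootSet E') := by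
  ext g
  let e : p.rootSet E' ≃ p.rootSet E := (rootsEquivRoots p E').symm.trans (rootsEquivRoots p E)
  have hmem : g ∈ (galActionHom p E').range ↔ e.permCongr g ∈ (galActionHom p E).range := by
    simp only [mem_range_galActionHom_iff_exists_algEquiv]
    refine exists_congr fun σ ↦ e.forall_congr fun y ↦ ?_
    simp [e]
  rw [hmem, h, Equiv.Perm.mem_alternatingGroup, Equiv.Perm.mem_alternatingGroup,
    Equiv.Perm.sign_permCongr]

end Transfer

section Trinomial

theorem pos_of_natCast_ne_zero {R : Type*} [AddMonoidWithOne R] {n : ℕ} (hn : (n : R) ≠ 0) :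
    0 < n :=
  Nat.pos_of_ne_zero fun h ↦ hn (by rw [h, Nat.cast_zero])

theorem natCast_right_ne_zero {R : Type*} [AddMonoidWithOne R] {i j : ℕ}
    (hij : ((i + j : ℕ) : R) = 0) (hi : (i : R) ≠ 0) : (j : R) ≠ 0 := fun hj ↦
  hi (by rwa [Nat.cast_add, hj, add_zero] at hij)

theorem irreducible_X_pow_add_C {R : Type*} [CommRing R] [IsDomain R] {π c : R} (hπ : Prime π)
    (hc : π ∣ c) (hc2 : ¬ π ^ 2 ∣ c) {s : ℕ} (hs : 0 < s) : Irreducible (X ^ s + C c) := by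
  have hmonic : (X ^ s + C c).Monic := monic_X_pow_add_C c hs.ne'
  refine irreducible_of_eisenstein_criterion (P := Ideal.span {π})
    ((Ideal.span_singleton_prime hπ.ne_zero).2 hπ) ?_ (fun l hl ↦ ?_) ?_ ?_ hmonic.isPrimitive
  · rw [hmonic.leadingCoeff, Ideal.mem_span_singleton]
    exact fun h ↦ hπ.not_isUnit (isUnit_of_dvd_one h)
  · rw [degree_X_pow_add_C hs, Nat.cast_lt] at hl
    rw [Ideal.mem_span_singleton, coeff_add, coeff_X_pow, if_neg hl.ne, zero_add, coeff_C]
    split_ifs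
    exacts [hc, dvd_zero π]
  · rw [degree_X_pow_add_C hs]
    exact_mod_cast hs
  · simpa [Ideal.span_singleton_pow, Ideal.mem_span_singleton, hs.ne, coeff_X_pow] using hc2

/-- The trinomial `Y ^ (i + j) - a * Y ^ i + w`. For `j = 3` and `w` a power of the
indeterminate it is the polynomial whose Galois group is computed; exchanging `i` and `j`
describes the reciprocals of its roots. -/
noncomputable def abhyankarPoly {R : Type*} [CommRing R] (i j : ℕ) (a w : R) : R[X] :=
  X ^ (i + j) - C a * X ^ i + C w

namespace abhyankarPoly

section CommRing

variable {R : Type*} [CommRing R] {i j : ℕ} {a w y : R}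

theorem map_eq {S : Type*} [CommRing S] (φ : R →+* S) :
    (abhyankarPoly i j a w).map φ = abhyankarPoly i j (φ a) (φ w) := by
  simp [abhyankarPoly]

theorem isRoot_iff : (abhyankarPoly i j a w).IsRoot y ↔ y ^ (i + j) - a * y ^ i + w = 0 := by
  simp [abhyankarPoly]

theorem natDegree_eq [Nontrivial R] (hj : 0 < j) : (abhyankarPoly i j a w).natDegree = i + j := by
  rw [abhyankarPoly]
  compute_degree!
  simp [hj.ne']

theorem monic (hj : 0 < j) : (abhyankarPoly i j a w).Monic := by
  nontriviality R
  rw [Monic, leadingCoeff, natDegree_eq hj, abhyankarPoly]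
  simp [coeff_X_pow, coeff_C, hj.ne']

theorem eval_derivative (hij : ((i + j : ℕ) : R) = 0) :
    (derivative (abhyankarPoly i j a w)).eval y = -a * i * y ^ (i - 1) := by
  simp only [abhyankarPoly, derivative_add, derivative_sub, derivative_X_pow, hij,
    derivative_C_mul, derivative_C]
  simp [mul_assoc]

theorem isRoot_mul (h : (abhyankarPoly i j a w).IsRoot y) {μ : R} (hμ : μ ^ j = 1) :
    (abhyankarPoly i j a (μ ^ i * w)).IsRoot (μ * y) := by
  rw [isRoot_iff] at h ⊢
  rw [mul_pow, mul_pow, pow_add μ, hμ]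
  linear_combination μ ^ i * h

end CommRing

section Field

variable {K : Type*} [Field K] {i j : ℕ} {a w u : K}

theorem isRoot_div (hu : u ≠ 0) (h : (abhyankarPoly j i a (w ^ j)).IsRoot u) :
    (abhyankarPoly i j a (w ^ i)).IsRoot (w / u) := by
  rw [isRoot_iff] at h ⊢
  have hfactor : (w / u) ^ (i + j) - a * (w / u) ^ i + w ^ i =
      w ^ i / u ^ (i + j) * (u ^ (j + i) - a * u ^ j + w ^ j) := by
    rw [div_pow, div_pow, pow_add, pow_add, pow_add]
    field_simp
    ring
  rw [hfactor, h, mul_zero]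

end Field

section Irreducible

variable {k : Type*} [Field k] {i j : ℕ} {a : k}

theorem not_X_sub_C_sq_dvd (hij : ((i + j : ℕ) : k) = 0) (hi : (i : k) ≠ 0) (ha : a ≠ 0) {b w : k}
    (hb : b ≠ 0) : ¬ (X - C b) ^ 2 ∣ abhyankarPoly i j a w := by
  rintro ⟨q, hq⟩
  have h := eval_derivative (y := b) (a := a) (w := w) hij
  rw [hq] at h
  simp [derivative_mul, derivative_X_sub_C_sq, ha, hi, hb] at h

theorem irreducible_ratFunc [IsAlgClosed k] (hij : ((i + j : ℕ) : k) = 0) (hi : (i : k) ≠ 0)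
    (ha : a ≠ 0) {s : ℕ} (hs : 0 < s) :
    Irreducible (abhyankarPoly i j (algebraMap k (RatFunc k) a) (RatFunc.X ^ s)) := by
  have hj : 0 < j := pos_of_natCast_ne_zero (natCast_right_ne_zero hij hi)
  obtain ⟨b, hb⟩ := IsAlgClosed.exists_pow_nat_eq a hj
  have hb0 : b ≠ 0 := by rintro rfl; exact ha (by rw [← hb, zero_pow hj.ne'])
  have hroot : X - C b ∣ abhyankarPoly i j a 0 :=
    dvd_iff_isRoot.2 (isRoot_iff.2 (by rw [pow_add, hb]; ring))
  have hswap : Bivariate.swap (X ^ s + C (abhyankarPoly i j a 0)) =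
      abhyankarPoly i j (C a) (X ^ s) := by
    simp [abhyankarPoly, Bivariate.swap_Y, Bivariate.swap_C, add_comm]
  have hirr : Irreducible (abhyankarPoly i j (C a) (X ^ s) : k[X][X]) := by
    rw [← hswap, MulEquiv.irreducible_iff]
    exact irreducible_X_pow_add_C (prime_X_sub_C b) hroot (not_X_sub_C_sq_dvd hij hi ha hb0) hs
  rw [(monic hj).irreducible_iff_irreducible_map_fraction_map (K := RatFunc k), map_eq] at hirr
  simpa using hirr

end Irreducible

end abhyankarPoly

end Trinomial

section PowerSeriesRoots

variable {k : Type*} [Field k]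

theorem powerSeries_rescale_C {R : Type*} [CommSemiring R] (η c : R) :
    PowerSeries.rescale η (PowerSeries.C c) = PowerSeries.C c := by
  ext d
  rw [PowerSeries.coeff_rescale, PowerSeries.coeff_C]
  split_ifs with hd <;> simp [hd]

theorem existsUnique_powerSeries_isRoot {f : (PowerSeries k)[X]} (hf : f.Monic) {b : k}
    (hb : (f.map PowerSeries.constantCoeff).IsRoot b)
    (hb' : (derivative (f.map PowerSeries.constantCoeff)).eval b ≠ 0) :
    ∃! y : PowerSeries k, f.IsRoot y ∧ PowerSeries.constantCoeff y = b := by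
  have mem_span {z : PowerSeries k} :
      z ∈ Ideal.span {(PowerSeries.X : PowerSeries k)} ↔ PowerSeries.constantCoeff z = 0 := by
    rw [Ideal.mem_span_singleton, PowerSeries.X_dvd_iff]
  have isUnit_derivative {y : PowerSeries k} (hy : PowerSeries.constantCoeff y = b) :
      IsUnit ((derivative f).eval y) := by
    rw [PowerSeries.isUnit_iff_constantCoeff, ← eval₂_at_apply, ← eval_map, ← derivative_map, hy]
    exact hb'.isUnit
  obtain ⟨y, hy, hyb⟩ := HenselianRing.is_henselian (I := Ideal.span {PowerSeries.X}) f hf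
    (PowerSeries.C b)
    (by rw [mem_span, ← eval₂_at_apply, ← eval_map, PowerSeries.constantCoeff_C, hb])
    ((isUnit_derivative (PowerSeries.constantCoeff_C b)).map _)
  have hyb : PowerSeries.constantCoeff y = b := by
    simpa [mem_span, sub_eq_zero] using hyb
  refine ⟨y, ⟨hy, hyb⟩, fun z ⟨hz, hzb⟩ ↦ ?_⟩
  exact IsLocalRing.eq_of_eval_eq_zero_of_not_isUnit_sub hz hy
    (by simp [PowerSeries.isUnit_iff_constantCoeff, hzb, hyb]) (isUnit_derivative hzb)

namespace abhyankarPoly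

/-- The root of `abhyankarPoly i j a ((X ^ m) ^ i)` in `k⟦X⟧` with constant coefficient `b`.
It is meaningful when `0 < m`, `b ^ j = a ≠ 0` and the characteristic divides `i + j` but not `i`;
otherwise its value is arbitrary. -/
noncomputable def seriesRoot (i j m : ℕ) (a b : k) : PowerSeries k :=
  Classical.epsilon fun y ↦
    (abhyankarPoly i j (PowerSeries.C a) ((PowerSeries.X ^ m) ^ i)).IsRoot y ∧
      PowerSeries.constantCoeff y = b

variable {i j m : ℕ} {a b : k}

variable (hij : ((i + j : ℕ) : k) = 0) (hi : (i : k) ≠ 0) (hm : 0 < m) (ha : a ≠ 0)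
  (hb : b ∈ nthRootsFinset j a)
include hij hi hm ha hb

theorem existsUnique_seriesRoot : ∃! y : PowerSeries k,
    (abhyankarPoly i j (PowerSeries.C a) ((PowerSeries.X ^ m) ^ i)).IsRoot y ∧
      PowerSeries.constantCoeff y = b := by
  have hi0 : 0 < i := pos_of_natCast_ne_zero hi
  have hj0 : 0 < j := pos_of_natCast_ne_zero (natCast_right_ne_zero hij hi)
  have hmap : (abhyankarPoly i j (PowerSeries.C a) ((PowerSeries.X ^ m) ^ i)).map
      PowerSeries.constantCoeff = abhyankarPoly i j a 0 := by
    simp [map_eq, hm.ne', hi0.ne']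
  apply existsUnique_powerSeries_isRoot (monic hj0) <;> rw [hmap]
  · rw [isRoot_iff, pow_add, (mem_nthRootsFinset hj0 a).1 hb]
    ring
  · simp [eval_derivative hij, ha, hi, ne_zero_of_mem_nthRootsFinset ha hb]

theorem isRoot_seriesRoot :
    (abhyankarPoly i j (PowerSeries.C a) ((PowerSeries.X ^ m) ^ i)).IsRoot
      (seriesRoot i j m a b) :=
  (Classical.epsilon_spec (existsUnique_seriesRoot hij hi hm ha hb).exists).1

theorem constantCoeff_seriesRoot :
    PowerSeries.constantCoeff (seriesRoot i j m a b) = b :=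
  (Classical.epsilon_spec (existsUnique_seriesRoot hij hi hm ha hb).exists).2

theorem C_mul_rescale_seriesRoot {μ η : k} (hμ : μ ^ j = 1) (hη : (μ * η ^ m) ^ i = 1) :
    PowerSeries.C μ * PowerSeries.rescale η (seriesRoot i j m a b) =
      seriesRoot i j m a (μ * b) := by
  have hj0 : 0 < j := pos_of_natCast_ne_zero (natCast_right_ne_zero hij hi)
  have hμb : μ * b ∈ nthRootsFinset j a := by
    rwa [mem_nthRootsFinset hj0, mul_pow, hμ, one_mul, ← mem_nthRootsFinset hj0]
  have hroot : (abhyankarPoly i j (PowerSeries.C a) ((PowerSeries.X ^ m) ^ i)).IsRoot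
      (PowerSeries.C μ * PowerSeries.rescale η (seriesRoot i j m a b)) := by
    have hX : PowerSeries.C μ ^ i * PowerSeries.rescale η ((PowerSeries.X ^ m) ^ i) =
        (PowerSeries.X ^ m) ^ i := by
      rw [map_pow, map_pow, PowerSeries.rescale_X, mul_pow, ← mul_pow, ← mul_assoc, ← map_pow,
        ← map_mul, mul_pow, ← map_pow, hη, map_one, one_mul]
    have h := (isRoot_seriesRoot hij hi hm ha hb).map (f := PowerSeries.rescale η)
    rw [map_eq, powerSeries_rescale_C] at h
    rw [← hX]
    exact isRoot_mul h (by rw [← map_pow, hμ, map_one])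
  refine (existsUnique_seriesRoot hij hi hm ha hμb).unique ⟨hroot, ?_⟩
    ⟨isRoot_seriesRoot hij hi hm ha hμb, constantCoeff_seriesRoot hij hi hm ha hμb⟩
  rw [map_mul, PowerSeries.constantCoeff_C, ← PowerSeries.coeff_zero_eq_constantCoeff_apply,
    PowerSeries.coeff_rescale, PowerSeries.coeff_zero_eq_constantCoeff_apply,
    constantCoeff_seriesRoot hij hi hm ha hb, pow_zero, one_mul]

theorem seriesRoot_ne_zero : seriesRoot i j m a b ≠ 0 := fun h ↦
  ne_zero_of_mem_nthRootsFinset ha hb <| by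
    rw [← constantCoeff_seriesRoot hij hi hm ha hb, h, map_zero]

end abhyankarPoly

end PowerSeriesRoots

section NthRoots

variable {k : Type*} [Field k] {n : ℕ}

theorem card_nthRootsFinset_of_isAlgClosed [IsAlgClosed k] (hn : (n : k) ≠ 0) {a : k} (ha : a ≠ 0) :
    (nthRootsFinset n a).card = n := by
  have : NeZero (n : k) := ⟨hn⟩
  obtain ⟨ζ, hζ⟩ := HasEnoughRootsOfUnity.exists_primitiveRoot k n
  obtain ⟨b, hb⟩ := IsAlgClosed.exists_pow_nat_eq a (NeZero.pos_of_neZero_natCast k (n := n))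
  rw [nthRootsFinset_def, Multiset.toFinset_card_of_nodup (hζ.nthRoots_nodup ha),
    hζ.card_nthRoots, if_pos ⟨b, hb⟩]

theorem exists_perm_nthRootsFinset {ζ a : k} (hn : 0 < n) (hζ : ζ ^ n = 1) :
    ∃ σ : Equiv.Perm (nthRootsFinset n a), ∀ b, (σ b : k) = ζ * b := by
  have hζ0 : ζ ≠ 0 := by
    rintro rfl
    simp [hn.ne'] at hζ
  refine ⟨(Equiv.mulLeft₀ ζ hζ0).subtypeEquiv fun b ↦ ?_, fun b ↦ rfl⟩
  simp [mem_nthRootsFinset hn, mul_pow, hζ]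

end NthRoots

section LaurentRoots

open scoped RatFunc

variable {k : Type*} [Field k]

theorem algebraMap_laurentSeries_algebraMap (P : k[X]) :
    algebraMap (RatFunc k) (LaurentSeries k) (algebraMap k[X] (RatFunc k) P) =
      algebraMap (PowerSeries k) (LaurentSeries k) P :=
  (RatFunc.coe_coe P).symm

theorem algebraMap_laurentSeries_C (c : k) :
    algebraMap (RatFunc k) (LaurentSeries k) (algebraMap k (RatFunc k) c) =
      algebraMap (PowerSeries k) (LaurentSeries k) (PowerSeries.C c) := by
  simpa [RatFunc.algebraMap_C, RatFunc.algebraMap_eq_C] using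
    algebraMap_laurentSeries_algebraMap (C c)

theorem algebraMap_laurentSeries_X :
    algebraMap (RatFunc k) (LaurentSeries k) RatFunc.X =
      algebraMap (PowerSeries k) (LaurentSeries k) PowerSeries.X := by
  simp

theorem exists_laurentSeries_rescale {η : k} (hη : η ≠ 0) :
    ∃ (Φ : LaurentSeries k →+* LaurentSeries k) (φ : RatFunc k →+* RatFunc k),
      (∀ x, Φ (algebraMap (RatFunc k) (LaurentSeries k) x) =
        algebraMap (RatFunc k) (LaurentSeries k) (φ x)) ∧
      ∀ y : PowerSeries k, Φ (algebraMap (PowerSeries k) (LaurentSeries k) y) =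
        algebraMap (PowerSeries k) (LaurentSeries k) (PowerSeries.rescale η y) := by
  let φ₀ : k[X] →+* k[X] := compRingHom (C η * X)
  have rescale_coe (P : k[X]) : PowerSeries.rescale η (P : PowerSeries k) = (φ₀ P : k[X]) := by
    ext d
    rw [PowerSeries.coeff_rescale, Polynomial.coeff_coe, Polynomial.coeff_coe,
      coe_compRingHom_apply, comp_C_mul_X_coeff, mul_comm]
  have hrescale : Function.Injective (PowerSeries.rescale η) := by
    rw [injective_iff_map_eq_zero]
    intro y hy
    ext d
    simpa [PowerSeries.coeff_rescale, hη] using congrArg (PowerSeries.coeff d) hy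
  have hφ₀ : Function.Injective φ₀ := by
    refine Function.Injective.of_comp (f := ((↑) : k[X] → PowerSeries k)) ?_
    simpa only [Function.comp_def, rescale_coe] using hrescale.comp (Polynomial.coe_injective k)
  let Φ : LaurentSeries k →+* LaurentSeries k := IsFractionRing.map hrescale
  let φ : RatFunc k →+* RatFunc k := IsFractionRing.map hφ₀
  have hΦ (y : PowerSeries k) : Φ (algebraMap (PowerSeries k) (LaurentSeries k) y) =
      algebraMap (PowerSeries k) (LaurentSeries k) (PowerSeries.rescale η y) :=
    IsLocalization.map_eq _ y
  have hcomm : Φ.comp (algebraMap (RatFunc k) (LaurentSeries k)) =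
      (algebraMap (RatFunc k) (LaurentSeries k)).comp φ := by
    refine IsFractionRing.ringHom_ext (A := k[X]) fun P ↦ ?_
    have hφ : φ (algebraMap k[X] (RatFunc k) P) = algebraMap k[X] (RatFunc k) (φ₀ P) :=
      IsLocalization.map_eq _ P
    simp only [RingHom.comp_apply, hφ, algebraMap_laurentSeries_algebraMap, hΦ, rescale_coe]
  exact ⟨Φ, φ, RingHom.congr_fun hcomm, hΦ⟩

namespace abhyankarPoly

/-- The trinomial `Y ^ (i + j) - a * Y ^ i + X ^ (m * i)` over `k(X)`. -/
noncomputable abbrev ratFuncPoly (i j m : ℕ) (a : k) : (RatFunc k)[X] :=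
  abhyankarPoly i j (algebraMap k (RatFunc k) a) ((RatFunc.X ^ m) ^ i)

/-- The roots of `ratFuncPoly i j m a` in `k((X))`. A `j`-th root `b` of `a` gives the power series
with constant coefficient `b`, and an `i`-th root `b` of `a` gives the quotient of `X ^ m` by a root
of the trinomial with `i` and `j` exchanged, of leading coefficient `b⁻¹`. -/
noncomputable def laurentRoot (i j m : ℕ) (a : k) :
    nthRootsFinset j a ⊕ nthRootsFinset i a → LaurentSeries k :=
  Sum.elim (fun b ↦ algebraMap (PowerSeries k) (LaurentSeries k) (seriesRoot i j m a b))
    fun b ↦ algebraMap (PowerSeries k) (LaurentSeries k) (PowerSeries.X ^ m) /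
      algebraMap (PowerSeries k) (LaurentSeries k) (seriesRoot j i m a b)

variable {i j m : ℕ} {a : k}

theorem aeval_laurentSeries (y : LaurentSeries k) :
    aeval y (ratFuncPoly i j m a) = 0 ↔
      (abhyankarPoly i j (algebraMap (PowerSeries k) (LaurentSeries k) (PowerSeries.C a))
        (algebraMap (PowerSeries k) (LaurentSeries k) (PowerSeries.X ^ m) ^ i)).IsRoot y := by
  rw [← eval_map_algebraMap, map_eq, algebraMap_laurentSeries_C, map_pow, map_pow,
    algebraMap_laurentSeries_X, map_pow, IsRoot.def]

variable (hij : ((i + j : ℕ) : k) = 0) (hi : (i : k) ≠ 0) (hm : 0 < m) (ha : a ≠ 0)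
include hij hi hm ha

theorem aeval_laurentRoot (x : nthRootsFinset j a ⊕ nthRootsFinset i a) :
    aeval (laurentRoot i j m a x) (ratFuncPoly i j m a) = 0 := by
  have hji : ((j + i : ℕ) : k) = 0 := by rwa [add_comm]
  have hj : (j : k) ≠ 0 := natCast_right_ne_zero hij hi
  rw [aeval_laurentSeries]
  obtain b | b := x
  · have h := (isRoot_seriesRoot hij hi hm ha b.2).map
      (f := algebraMap (PowerSeries k) (LaurentSeries k))
    rwa [map_eq, map_pow] at h
  · have h := (isRoot_seriesRoot hji hj hm ha b.2).map
      (f := algebraMap (PowerSeries k) (LaurentSeries k))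
    rw [map_eq, map_pow] at h
    refine isRoot_div (fun h0 ↦ seriesRoot_ne_zero hji hj hm ha b.2 ?_) h
    exact (map_eq_zero_iff _ (IsFractionRing.injective _ (LaurentSeries k))).1 h0

theorem laurentRoot_injective : Function.Injective (laurentRoot i j m a) := by
  have hji : ((j + i : ℕ) : k) = 0 := by rwa [add_comm]
  have hj : (j : k) ≠ 0 := natCast_right_ne_zero hij hi
  have hψ := IsFractionRing.injective (PowerSeries k) (LaurentSeries k)
  refine Function.Injective.sumElim (fun b c h ↦ Subtype.ext ?_) (fun b c h ↦ Subtype.ext ?_) ?_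
  · rw [← constantCoeff_seriesRoot hij hi hm ha b.2, hψ h,
      constantCoeff_seriesRoot hij hi hm ha c.2]
  · have hX : algebraMap (PowerSeries k) (LaurentSeries k) (PowerSeries.X ^ m) ≠ 0 :=
      (map_ne_zero_iff _ hψ).2 (pow_ne_zero m PowerSeries.X_ne_zero)
    rw [← constantCoeff_seriesRoot hji hj hm ha b.2, hψ (inv_injective (mul_left_cancel₀ hX h)),
      constantCoeff_seriesRoot hji hj hm ha c.2]
  · intro b c h
    rw [eq_div_iff ((map_ne_zero_iff _ hψ).2 (seriesRoot_ne_zero hji hj hm ha c.2)), ← map_mul] at h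
    have hbc : (b * c : k) = 0 := by
      rw [← constantCoeff_seriesRoot hij hi hm ha b.2, ← constantCoeff_seriesRoot hji hj hm ha c.2,
        ← map_mul, hψ h, map_pow, PowerSeries.constantCoeff_X, zero_pow hm.ne']
    exact mul_ne_zero (ne_zero_of_mem_nthRootsFinset ha b.2) (ne_zero_of_mem_nthRootsFinset ha c.2)
      hbc

variable {Φ : LaurentSeries k →+* LaurentSeries k} {η l : k}
  (hΦ : ∀ y, Φ (algebraMap (PowerSeries k) (LaurentSeries k) y) =
    algebraMap (PowerSeries k) (LaurentSeries k) (PowerSeries.rescale η y))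
  (hl : l ^ j = 1) (hη : (l * η ^ m) ^ i = 1)
include hΦ hl hη

theorem laurentRoot_inl_eq {b c : nthRootsFinset j a} (hc : (c : k) = l * b) :
    laurentRoot i j m a (.inl c) = algebraMap (RatFunc k) (LaurentSeries k)
      (algebraMap k (RatFunc k) l) * Φ (laurentRoot i j m a (.inl b)) := by
  simp only [laurentRoot, Sum.elim_inl, hΦ, algebraMap_laurentSeries_C, ← map_mul, hc,
    C_mul_rescale_seriesRoot hij hi hm ha b.2 hl hη]

theorem laurentRoot_inr_eq {b c : nthRootsFinset i a} (hc : l * η ^ m * c = b) :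
    laurentRoot i j m a (.inr c) = algebraMap (RatFunc k) (LaurentSeries k)
      (algebraMap k (RatFunc k) l) * Φ (laurentRoot i j m a (.inr b)) := by
  have hji : ((j + i : ℕ) : k) = 0 := by rwa [add_comm]
  have hj : (j : k) ≠ 0 := natCast_right_ne_zero hij hi
  have hθ : l * η ^ m ≠ 0 := left_ne_zero_of_mul (hc ▸ ne_zero_of_mem_nthRootsFinset ha b.2)
  have hroot : PowerSeries.rescale η (seriesRoot j i m a b) =
      PowerSeries.C (l * η ^ m) * seriesRoot j i m a c := by
    have h := C_mul_rescale_seriesRoot hji hj hm ha b.2 (μ := (l * η ^ m)⁻¹) (η := η)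
      (by rw [inv_pow, hη, inv_one]) (by
        rw [inv_mul_eq_div, div_mul_cancel_right₀ (right_ne_zero_of_mul hθ), inv_pow, hl, inv_one])
    rw [← hc, inv_mul_cancel_left₀ hθ] at h
    rw [← h, hc, ← mul_assoc, ← map_mul, mul_inv_cancel₀ hθ, map_one, one_mul]
  have hC : algebraMap (PowerSeries k) (LaurentSeries k) (PowerSeries.C (l * η ^ m)) ≠ 0 :=
    (map_ne_zero ((algebraMap (PowerSeries k) (LaurentSeries k)).comp PowerSeries.C)).2 hθ
  have hX : PowerSeries.C l * PowerSeries.rescale η (PowerSeries.X ^ m) =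
      PowerSeries.C (l * η ^ m) * PowerSeries.X ^ m := by
    rw [map_pow, PowerSeries.rescale_X, mul_pow, ← mul_assoc, ← map_pow, ← map_mul]
  simp only [laurentRoot, Sum.elim_inr, map_div₀, hΦ, algebraMap_laurentSeries_C, hroot]
  rw [← mul_div_assoc, ← map_mul, hX, map_mul _ _ (PowerSeries.X ^ m),
    map_mul _ _ (seriesRoot j i m a c), mul_div_mul_left _ _ hC]

end abhyankarPoly

end LaurentRoots

section Conclusion

open Polynomial.Gal

theorem prod_rootSet_eq {F E : Type*} [Field F] [Field E] [Algebra F E] {p : F[X]} (hp : p.Monic)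
    (hcard : Fintype.card (p.rootSet E) = p.natDegree) :
    ∏ y : p.rootSet E, (y : E) = algebraMap F E ((-1) ^ p.natDegree * p.coeff 0) := by
  have hp' := map_algebraMap_eq_nodal_of_injective hp hcard.symm
    (Subtype.val_injective (p := (· ∈ p.rootSet E))) fun y ↦ (mem_rootSet.1 y.2).2
  have h0 : algebraMap F E (p.coeff 0) = ∏ y : p.rootSet E, (0 - (y : E)) := by
    rw [← coeff_map, hp', coeff_zero_eq_eval_zero, Lagrange.eval_nodal]
  rw [map_mul, h0, ← hcard]
  simp [← Finset.card_univ, Finset.prod_neg, ← mul_assoc, ← mul_pow]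

namespace abhyankarPoly

theorem coeff_zero_eq {R : Type*} [CommRing R] {i j : ℕ} {a w : R} (hi : 0 < i) :
    (abhyankarPoly i j a w).coeff 0 = w := by
  simp [abhyankarPoly, coeff_X_pow, hi.ne, (Nat.add_pos_left hi j).ne]

theorem prod_aeval_derivative {F E : Type*} [Field F] [Field E] [Algebra F E] {i j : ℕ} {a w : F}
    (hij : ((i + j : ℕ) : F) = 0) (hi : 0 < i) (hj : 0 < j)
    (hcard : Fintype.card ((abhyankarPoly i j a w).rootSet E) = i + j) :
    ∏ y : (abhyankarPoly i j a w).rootSet E, aeval (y : E) (derivative (abhyankarPoly i j a w)) =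
      algebraMap F E ((-a * i) ^ (i + j) * ((-1) ^ (i + j) * w) ^ (i - 1)) := by
  have hder (y : E) : aeval y (derivative (abhyankarPoly i j a w)) =
      algebraMap F E (-a * i) * y ^ (i - 1) := by
    have hijE : ((i + j : ℕ) : E) = 0 := by rw [← map_natCast (algebraMap F E), hij, map_zero]
    rw [← eval_map_algebraMap, ← derivative_map, map_eq, eval_derivative hijE]
    simp
  have hprod := prod_rootSet_eq (E := E) (monic (a := a) (w := w) hj)
    (hcard.trans (natDegree_eq hj).symm)
  rw [natDegree_eq hj, coeff_zero_eq hi] at hprod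
  simp only [hder, Finset.prod_mul_distrib, Finset.prod_pow, hprod, Finset.prod_const,
    Finset.card_univ, hcard, ← map_pow, ← map_mul]

theorem isSquare_prod_derivative {F k : Type*} [Field k] [IsAlgClosed k] [Field F] [Algebra k F]
    (i n : ℕ) (a : k) (w : F) :
    IsSquare ((-algebraMap k F a * i) ^ n * ((-1) ^ n * w ^ i) ^ (i - 1)) := by
  have hconst (c : k) : IsSquare (algebraMap k F c) := by
    obtain ⟨r, rfl⟩ := IsAlgClosed.exists_pow_nat_eq c two_pos
    exact (IsSquare.sq r).map _
  have h1 := hconst (-a * i)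
  have h2 := hconst (-1)
  simp only [map_mul, map_neg, map_natCast, map_one] at h1 h2
  rw [mul_pow _ (w ^ i), ← pow_mul w]
  exact (h1.pow n).mul (((h2.pow n).pow _).mul ((Nat.even_mul_pred_self i).isSquare_pow w))

open scoped RatFunc

variable {k : Type*} [Field k] {i j m : ℕ} {a : k}

section Normalizer

variable (hij : ((i + j : ℕ) : k) = 0) (hi : (i : k) ≠ 0) (hm : 0 < m) (ha : a ≠ 0)
  [Fact (((ratFuncPoly i j m a).map (algebraMap (RatFunc k) (LaurentSeries k))).Splits)]
  (e : nthRootsFinset j a ⊕ nthRootsFinset i a ≃ (ratFuncPoly i j m a).rootSet (LaurentSeries k))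
  (he : ∀ x, (e x : LaurentSeries k) = laurentRoot i j m a x)
include hij hi hm ha he

theorem permCongr_sumCongr_mem_normalizer {l η : k} (hl : l ^ j = 1) (hη : (l * η ^ m) ^ i = 1)
    {σ : Equiv.Perm (nthRootsFinset j a)} (hσ : ∀ b, (σ b : k) = l * b)
    {ρ : Equiv.Perm (nthRootsFinset i a)} (hρ : ∀ b, l * η ^ m * ρ b = b) :
    e.permCongr (σ.sumCongr ρ) ∈ Subgroup.normalizer
      ((galActionHom (ratFuncPoly i j m a) (LaurentSeries k)).range : Set (Equiv.Perm _)) := by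
  have hθ : l * η ^ m ≠ 0 := by
    rintro h
    simp [h, (pos_of_natCast_ne_zero hi).ne'] at hη
  have hη0 : η ≠ 0 := ne_zero_pow hm.ne' (right_ne_zero_of_mul hθ)
  obtain ⟨Φ, φ, hφ, hΦ⟩ := exists_laurentSeries_rescale hη0
  refine mem_normalizer_range_galActionHom hφ (c := algebraMap k (RatFunc k) l)
    (by simpa using left_ne_zero_of_mul hθ) fun y ↦ ?_
  obtain ⟨b | b, rfl⟩ := e.surjective y
  · have heb : e.permCongr (σ.sumCongr ρ) (e (.inl b)) = e (.inl (σ b)) := by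
      rw [Equiv.permCongr_apply, Equiv.symm_apply_apply, Equiv.sumCongr_apply, Sum.map_inl]
    rw [heb, he, he]
    exact laurentRoot_inl_eq hij hi hm ha hΦ hl hη (hσ b)
  · have heb : e.permCongr (σ.sumCongr ρ) (e (.inr b)) = e (.inr (ρ b)) := by
      rw [Equiv.permCongr_apply, Equiv.symm_apply_apply, Equiv.sumCongr_apply, Sum.map_inr]
    rw [heb, he, he]
    exact laurentRoot_inr_eq hij hi hm ha hΦ hl hη (hρ b)

variable [IsAlgClosed k]

theorem exists_perm_inl_mem_normalizer (hj : 1 < j) :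
    ∃ σ : Equiv.Perm (nthRootsFinset j a), (∀ b, σ b ≠ b) ∧
      e.permCongr (σ.sumCongr 1) ∈ Subgroup.normalizer
        ((galActionHom (ratFuncPoly i j m a) (LaurentSeries k)).range : Set (Equiv.Perm _)) := by
  have : NeZero (j : k) := ⟨natCast_right_ne_zero hij hi⟩
  obtain ⟨ω, hω⟩ := HasEnoughRootsOfUnity.exists_primitiveRoot k j
  obtain ⟨σ, hσ⟩ := exists_perm_nthRootsFinset (a := a) (one_pos.trans hj) hω.pow_eq_one
  obtain ⟨η, hη⟩ := IsAlgClosed.exists_pow_nat_eq ω⁻¹ hm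
  have hωη : ω * η ^ m = 1 := by rw [hη, mul_inv_cancel₀ (hω.ne_zero (one_pos.trans hj).ne')]
  refine ⟨σ, fun b hb ↦ hω.ne_one hj ?_, permCongr_sumCongr_mem_normalizer hij hi hm ha e he
    hω.pow_eq_one (by rw [hωη, one_pow]) hσ fun b ↦ by simp [hωη]⟩
  rw [← mul_eq_right₀ (ne_zero_of_mem_nthRootsFinset ha b.2), ← hσ, hb]

theorem exists_perm_inr_mem_normalizer (b c : nthRootsFinset i a) :
    ∃ ρ : Equiv.Perm (nthRootsFinset i a), ρ b = c ∧
      e.permCongr (Equiv.sumCongr 1 ρ) ∈ Subgroup.normalizer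
        ((galActionHom (ratFuncPoly i j m a) (LaurentSeries k)).range : Set (Equiv.Perm _)) := by
  have hb0 : (b : k) ≠ 0 := ne_zero_of_mem_nthRootsFinset ha b.2
  have hc0 : (c : k) ≠ 0 := ne_zero_of_mem_nthRootsFinset ha c.2
  have hipos := pos_of_natCast_ne_zero hi
  have hcb : (c / b : k) ^ i = 1 := by
    rw [div_pow, (mem_nthRootsFinset hipos _).1 b.2, (mem_nthRootsFinset hipos _).1 c.2,
      div_self ha]
  obtain ⟨η, hη⟩ := IsAlgClosed.exists_pow_nat_eq (b / c : k) hm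
  obtain ⟨ρ, hρ⟩ := exists_perm_nthRootsFinset (a := a) hipos hcb
  refine ⟨ρ, Subtype.ext (by rw [hρ, div_mul_cancel₀ _ hb0]),
    permCongr_sumCongr_mem_normalizer hij hi hm ha e he (l := 1) (η := η) (one_pow j) ?_
      (fun b ↦ by simp) fun d ↦ ?_⟩
  · rw [hη, one_mul, ← inv_div, inv_pow, hcb, inv_one]
  · rw [hη, hρ]
    field_simp

end Normalizer

theorem card_nthRootsFinset_sum [IsAlgClosed k] (hij : ((i + j : ℕ) : k) = 0) (hi : (i : k) ≠ 0)
    (ha : a ≠ 0) : Fintype.card (nthRootsFinset j a ⊕ nthRootsFinset i a) = i + j := by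
  rw [Fintype.card_sum, Fintype.card_coe, Fintype.card_coe,
    card_nthRootsFinset_of_isAlgClosed (natCast_right_ne_zero hij hi) ha,
    card_nthRootsFinset_of_isAlgClosed hi ha, add_comm]

section AlternatingGroup

variable [IsAlgClosed k] (hij : ((i + j : ℕ) : k) = 0) (hi : (i : k) ≠ 0) (hm : 0 < m) (ha : a ≠ 0)
include hij hi hm ha

theorem splits_laurentSeries :
    ((ratFuncPoly i j m a).map (algebraMap (RatFunc k) (LaurentSeries k))).Splits := by
  have hj := pos_of_natCast_ne_zero (natCast_right_ne_zero hij hi)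
  exact splits_map_algebraMap_of_injective (monic hj)
    ((natDegree_eq hj).trans (card_nthRootsFinset_sum hij hi ha).symm)
    (laurentRoot_injective hij hi hm ha) (aeval_laurentRoot hij hi hm ha)

theorem exists_equiv_rootSet_laurentSeries :
    ∃ e : nthRootsFinset j a ⊕ nthRootsFinset i a ≃ (ratFuncPoly i j m a).rootSet (LaurentSeries k),
      ∀ x, (e x : LaurentSeries k) = laurentRoot i j m a x := by
  have hj := pos_of_natCast_ne_zero (natCast_right_ne_zero hij hi)
  exact exists_equiv_rootSet_of_injective (monic hj)
    ((natDegree_eq hj).trans (card_nthRootsFinset_sum hij hi ha).symm)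
    (laurentRoot_injective hij hi hm ha) (aeval_laurentRoot hij hi hm ha)

theorem card_rootSet_laurentSeries :
    Fintype.card ((ratFuncPoly i j m a).rootSet (LaurentSeries k)) = i + j := by
  obtain ⟨e, -⟩ := exists_equiv_rootSet_laurentSeries hij hi hm ha
  rw [← Fintype.card_congr e, card_nthRootsFinset_sum hij hi ha]

variable [Fact (((ratFuncPoly i j m a).map (algebraMap (RatFunc k) (LaurentSeries k))).Splits)]

theorem isPretransitive_range_galActionHom : MulAction.IsPretransitive
    (galActionHom (ratFuncPoly i j m a) (LaurentSeries k)).range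
    ((ratFuncPoly i j m a).rootSet (LaurentSeries k)) := by
  have hirr := irreducible_ratFunc hij hi ha (Nat.mul_pos hm (pos_of_natCast_ne_zero hi))
  rw [pow_mul] at hirr
  have := galAction_isPretransitive _ (LaurentSeries k) hirr
  refine ⟨fun x y ↦ ?_⟩
  obtain ⟨g, rfl⟩ := MulAction.exists_smul_eq (ratFuncPoly i j m a).Gal x y
  exact ⟨⟨_, g, rfl⟩, rfl⟩

theorem range_galActionHom_laurentSeries_le_alternatingGroup (h2 : (2 : k) ≠ 0) :
    (galActionHom (ratFuncPoly i j m a) (LaurentSeries k)).range ≤ alternatingGroup _ := by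
  have hj := pos_of_natCast_ne_zero (natCast_right_ne_zero hij hi)
  have hcard := card_rootSet_laurentSeries hij hi hm ha
  have hijF : ((i + j : ℕ) : RatFunc k) = 0 := by
    rw [← map_natCast (algebraMap k (RatFunc k)), hij, map_zero]
  have h2F : (2 : RatFunc k) ≠ 0 := by
    simpa only [map_ofNat, map_zero] using (algebraMap k (RatFunc k)).injective.ne h2
  obtain ⟨r, hr⟩ := IsAlgClosed.exists_pow_nat_eq (-1 : k) two_pos
  have hneg : IsSquare (-1 : RatFunc k) :=
    ⟨algebraMap k _ r, by rw [← map_mul, ← sq, hr, map_neg, map_one]⟩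
  exact range_galActionHom_le_alternatingGroup h2F hneg (monic hj)
    (hcard.trans (natDegree_eq hj).symm)
    (prod_aeval_derivative hijF (pos_of_natCast_ne_zero hi) hj hcard)
    (isSquare_prod_derivative i (i + j) a (RatFunc.X ^ m))

end AlternatingGroup

variable [IsAlgClosed k] {E : Type*} [Field E] [Algebra (RatFunc k) E]

theorem card_rootSet_of_splits (hij : ((i + j : ℕ) : k) = 0) (hi : (i : k) ≠ 0) (hm : 0 < m)
    (ha : a ≠ 0) [Fact (((ratFuncPoly i j m a).map (algebraMap (RatFunc k) E)).Splits)] :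
    Fintype.card ((ratFuncPoly i j m a).rootSet E) = i + j := by
  have hsplits := Fact.mk (splits_laurentSeries hij hi hm ha)
  rw [← card_rootSet_laurentSeries hij hi hm ha]
  exact Fintype.card_congr ((rootsEquivRoots _ E).symm.trans (rootsEquivRoots _ (LaurentSeries k)))

theorem range_galActionHom_eq_alternatingGroup (hi3 : ((i + 3 : ℕ) : k) = 0) (hi : (i : k) ≠ 0)
    (hm : 0 < m) (ha : a ≠ 0) (h2 : (2 : k) ≠ 0) (h3i : ¬ 3 ∣ i)
    [Fact (((ratFuncPoly i 3 m a).map (algebraMap (RatFunc k) E)).Splits)] :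
    (galActionHom (ratFuncPoly i 3 m a) E).range = alternatingGroup _ := by
  have hsplits := Fact.mk (splits_laurentSeries hi3 hi hm ha)
  refine range_galActionHom_eq_alternatingGroup_congr (E := LaurentSeries k) ?_
  have hcard := card_rootSet_laurentSeries hi3 hi hm ha
  have hcard3 : Fintype.card (nthRootsFinset 3 a) = 3 := by
    rw [Fintype.card_coe, card_nthRootsFinset_of_isAlgClosed (natCast_right_ne_zero hi3 hi) ha]
  have hi1 : i ≠ 1 := by
    rintro rfl
    exact mul_ne_zero h2 h2 (by rw [← hi3]; norm_num)
  have hipos := pos_of_natCast_ne_zero hi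
  have := isPretransitive_range_galActionHom hi3 hi hm ha
  obtain ⟨e, he⟩ := exists_equiv_rootSet_laurentSeries hi3 hi hm ha
  obtain ⟨σ, hσ, hσN⟩ := exists_perm_inl_mem_normalizer hi3 hi hm ha e he (by simp)
  exact eq_alternatingGroup_of_permCongr_sumCongr_mem_normalizer
    (range_galActionHom_laurentSeries_le_alternatingGroup hi3 hi hm ha h2) (by lia)
    (by rw [hcard]; lia) e hcard3 hσ hσN (exists_perm_inr_mem_normalizer hi3 hi hm ha e he)

end abhyankarPoly

end Conclusion

theorem natCast_ne_zero_of_coprime {R : Type*} [CommRing R] [Nontrivial R] {n m : ℕ}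
    (hn : (n : R) = 0) (hnm : n.Coprime m) : (m : R) ≠ 0 := by
  have h := hnm.cast (R := R)
  rw [hn, isCoprime_zero_left] at h
  exact h.ne_zero

theorem stmt_7_general {k : Type*} [Field k] [IsAlgClosed k] {n s t : ℕ} (h2 : ringChar k ≠ 2)
    (hn : (n : k) = 0) (hco : n.Coprime t) (hs : 0 < s) (hts : t ∣ s)
    (htn : t + 3 = n) {a : k} (ha : a ≠ 0) {f : Polynomial (RatFunc k)}
    (hf : f = X ^ n - C (algebraMap k (RatFunc k) a) * X ^ t + C (RatFunc.X ^ s)) :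
    haveI : Fact ((f.map (algebraMap (RatFunc k) f.SplittingField)).Splits) :=
      ⟨SplittingField.splits f⟩
    Fintype.card (f.rootSet f.SplittingField) = n ∧
      (Polynomial.Gal.galActionHom f f.SplittingField).range =
        alternatingGroup (f.rootSet f.SplittingField) := by
  obtain ⟨m, rfl⟩ := hts
  subst htn
  have htk : (t : k) ≠ 0 := natCast_ne_zero_of_coprime hn hco
  have hm : 0 < m := Nat.pos_of_mul_pos_left hs
  have h3t : ¬ 3 ∣ t := fun h ↦ by
    simpa using Nat.eq_one_of_dvd_coprimes hco (dvd_add h dvd_rfl) h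
  have hfw : f = abhyankarPoly.ratFuncPoly t 3 m a := by
    rw [hf, abhyankarPoly.ratFuncPoly, abhyankarPoly, ← pow_mul, mul_comm t m]
  clear hf
  subst hfw
  have hsplits := Fact.mk (SplittingField.splits (abhyankarPoly.ratFuncPoly t 3 m a))
  exact ⟨abhyankarPoly.card_rootSet_of_splits hn htk hm ha,
    abhyankarPoly.range_galActionHom_eq_alternatingGroup hn htk hm ha (Ring.two_ne_zero h2) h3t⟩

/-- Abhyankar: over an algebraically closed field `k` of odd characteristic
`p ∉ {11, 23}`, for positive integers `n, s, t` with `gcd(n,t) = 1`, `p ∣ n`,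
`t ∣ s` and `1 < t = n - 3`, the polynomial `Y^n - a·Y^t + X^s` over `k(X)`
has `n` distinct roots in its splitting field, and the image of its Galois
group in the permutation group of the set of roots is exactly the alternating
group on those roots. -/
theorem stmt_7 (p : ℕ) (hp : p.Prime) (hodd : Odd p) (h11 : p ≠ 11) (h23 : p ≠ 23)
    (k : Type*) [Field k] [IsAlgClosed k] [CharP k p]
    (n s t : ℕ) (hn : 0 < n) (hs : 0 < s) (ht1 : 1 < t)
    (hco : Nat.gcd n t = 1) (hpn : p ∣ n) (hts : t ∣ s) (htn : t + 3 = n)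
    (a : k) (ha : a ≠ 0)
    (f : Polynomial (RatFunc k))
    (hf : f = X ^ n - C (algebraMap k (RatFunc k) a) * X ^ t + C (RatFunc.X ^ s)) :
    haveI : Fact ((f.map (algebraMap (RatFunc k) f.SplittingField)).Splits) :=
      ⟨SplittingField.splits f⟩
    Fintype.card (f.rootSet f.SplittingField) = n ∧
      (Polynomial.Gal.galActionHom f f.SplittingField).range =
        alternatingGroup (f.rootSet f.SplittingField) := by
  have h2 : ringChar k ≠ 2 := ringChar.eq k p ▸ hodd.ne_two_of_dvd_nat dvd_rfl
  exact stmt_7_general h2 ((CharP.cast_eq_zero_iff k p n).2 hpn) hco hs hts htn ha hf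
end
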